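/- arXiv:2501.09734 — 6 statements merged into one kernel-verified Lean document; each statement's English description precedes it below -/
import Mathlib

section
/- Let ε > 0, ε_S ∈ (0,1), S_max > 0, κ_T ≥ 0 and α > 0. Let f : ℝ^d → ℝ be twice continuously differentiable with L_H-Lipschitz continuous Hessian (L_H > 0), let x ∈ ℝ^d, S ∈ ℝ^{l×d} and ŝ ∈ ℝ^l. Let M = [∇f(x) | ∇²f(x)] ∈ ℝ^{d×(d+1)} be the matrix whose first column is ∇f(x) and whose remaining d columns form ∇²f(x). Assume: (a) ‖S M z‖² ≥ (1−ε_S)‖M z‖² for all z ∈ ℝ^{d+1}; (b) ‖S‖ ≤ S_max; (c) ‖S∇f(x) + S∇²f(x)Sᵀŝ + (1/α)·S Sᵀŝ·‖Sᵀŝ‖‖ ≤ κ_T·‖Sᵀŝ‖²; (d) ‖∇f(x + Sᵀŝ)‖ ≥ ε. Then ‖Sᵀŝ‖² ≥ (ε/2)·min{ 2/L_H, √(1−ε_S)/(S_max/α + κ_T) }. -/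
open scoped BigOperators NNReal
open MeasureTheory ProbabilityTheory

namespace RARC

noncomputable def enorm {n : ℕ} (v : Fin n → ℝ) : ℝ := Real.sqrt (∑ i, v i ^ 2)

noncomputable def opNorm {m n : ℕ} (S : Matrix (Fin m) (Fin n) ℝ) : ℝ :=
  sSup {c : ℝ | ∃ v : Fin n → ℝ, enorm v = 1 ∧ c = enorm (S.mulVec v)}

noncomputable def grad {n : ℕ} (f : (Fin n → ℝ) → ℝ) (x : Fin n → ℝ) : Fin n → ℝ :=
  fun i => fderiv ℝ f x (Pi.single i 1)

noncomputable def hess {n : ℕ} (f : (Fin n → ℝ) → ℝ) (x : Fin n → ℝ) :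
    Matrix (Fin n) (Fin n) ℝ :=
  Matrix.of fun i j =>
    fderiv ℝ (fun y => fderiv ℝ f y (Pi.single j 1)) x (Pi.single i 1)

noncomputable def qhat {d l : ℕ} (f : (Fin d → ℝ) → ℝ) (x : Fin d → ℝ)
    (S : Matrix (Fin l) (Fin d) ℝ) (s : Fin l → ℝ) : ℝ :=
  f x + (∑ i, S.mulVec (grad f x) i * s i)
    + (1/2) * (∑ i, s i * (S * hess f x * S.transpose).mulVec s i)

noncomputable def mhat {d l : ℕ} (f : (Fin d → ℝ) → ℝ) (x : Fin d → ℝ)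
    (S : Matrix (Fin l) (Fin d) ℝ) (α : ℝ) (s : Fin l → ℝ) : ℝ :=
  qhat f x S s + (1/(3*α)) * enorm (S.transpose.mulVec s) ^ 3

noncomputable def lambdaMin {n : ℕ} (A : Matrix (Fin n) (Fin n) ℝ) : ℝ :=
  sInf {t : ℝ | ∃ v : Fin n → ℝ, enorm v = 1 ∧ t = ∑ i, v i * A.mulVec v i}

def LipschitzHessian {n : ℕ} (f : (Fin n → ℝ) → ℝ) (L : ℝ) : Prop :=
  ∀ x y : Fin n → ℝ, opNorm (hess f y - hess f x) ≤ L * enorm (y - x)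

noncomputable def augM {d : ℕ} (f : (Fin d → ℝ) → ℝ) (x : Fin d → ℝ) :
    Matrix (Fin d) (Fin (d+1)) ℝ :=
  Matrix.of fun i j => Fin.cases (grad f x i) (fun j' => hess f x i j') j

noncomputable def gaussVec (l : ℕ) : Measure (Fin l → ℝ) :=
  Measure.pi fun _ => gaussianReal 0 (l : ℝ≥0)⁻¹

noncomputable def scaledGaussian (l d : ℕ) : Measure (Fin l → Fin d → ℝ) :=
  Measure.pi fun _ : Fin l => Measure.pi fun _ : Fin d => gaussianReal 0 (l : ℝ≥0)⁻¹


/-! With `p = Sᵀŝ` and `v = ∇f(x) + ∇²f(x) p`, the Taylor bound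
`‖∇f(x + p) - v‖ ≤ (L_H / 2) ‖p‖²` and the gradient lower bound give `ε ≤ (L_H / 2) ‖p‖² + ‖v‖`.
Since `v = M (1, p)`, the sketch nearly preserves its norm, so `√(1 - ε_S) ‖v‖ ≤ ‖S v‖`, and
approximate stationarity bounds `‖S v‖` by `(S_max / α + κ_T) ‖p‖²`. Hence `ε ≤ ‖p‖² (1/a + 1/b)`,
where `a` and `b` are the two terms of the minimum, and `1/a + 1/b ≤ 2 / min a b`. -/

section NormedSpace

variable {E F : Type*} [NormedAddCommGroup E] [NormedSpace ℝ E]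
  [NormedAddCommGroup F] [NormedSpace ℝ F]

theorem norm_sub_sub_fderiv_le_of_lipschitz {g : E → F} {g' : E → E →L[ℝ] F} {L : ℝ}
    (hg : ∀ y, HasFDerivAt g (g' y) y) (hLip : ∀ x y, ‖g' y - g' x‖ ≤ L * ‖y - x‖) (x p : E) :
    ‖g (x + p) - g x - g' x p‖ ≤ L / 2 * ‖p‖ ^ 2 := by
  let r : ℝ → F := fun t => g (x + t • p) - g x - t • g' x p
  have hr (t : ℝ) : HasDerivAt r ((g' (x + t • p) - g' x) p) t := by
    have hline : HasDerivAt (fun t : ℝ => x + t • p) p t := by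
      simpa using ((hasDerivAt_id t).smul_const p).const_add x
    exact ((((hg (x + t • p)).comp_hasDerivAt t hline).sub_const (g x)).sub
      ((hasDerivAt_id t).smul_const (g' x p))).congr_deriv (by simp)
  have hB (t : ℝ) : HasDerivAt (fun t => L / 2 * ‖p‖ ^ 2 * t ^ 2) (L * ‖p‖ ^ 2 * t) t :=
    ((hasDerivAt_pow 2 t).const_mul (L / 2 * ‖p‖ ^ 2)).congr_deriv (by ring)
  have hbound (t : ℝ) (ht : t ∈ Set.Ico 0 1) :
      ‖(g' (x + t • p) - g' x) p‖ ≤ L * ‖p‖ ^ 2 * t :=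
    calc ‖(g' (x + t • p) - g' x) p‖
      _ ≤ L * ‖x + t • p - x‖ * ‖p‖ := ContinuousLinearMap.le_of_opNorm_le _ (hLip _ _) p
      _ = L * ‖p‖ ^ 2 * t := by
        rw [add_sub_cancel_left, norm_smul_of_nonneg ht.1]
        ring
  have hr_one : ‖r 1‖ ≤ L / 2 * ‖p‖ ^ 2 * 1 ^ 2 :=
    image_norm_le_of_norm_deriv_right_le_deriv_boundary
      (fun t _ => (hr t).continuousAt.continuousWithinAt)
      (fun t _ => (hr t).hasDerivWithinAt) (by simp [r]) hB hbound
      (Set.right_mem_Icc.2 zero_le_one)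
  simpa [r] using hr_one

theorem differentiableAt_fderiv_of_contDiffAt_two {f : E → F} {y : E} (hf : ContDiffAt ℝ 2 f y) :
    DifferentiableAt ℝ (fderiv ℝ f) y :=
  (hf.fderiv_right one_add_one_eq_two.le).differentiableAt one_ne_zero

theorem norm_map_le_of_norm_map_add_smul_le {S : E →L[ℝ] F} {v p : E} {s c b : ℝ}
    (hS : ‖S‖ ≤ s) (hc : 0 ≤ c) (h : ‖S v + c • S p‖ ≤ b) : ‖S v‖ ≤ b + c * (s * ‖p‖) :=
  calc ‖S v‖
    _ ≤ ‖S v + c • S p‖ + ‖c • S p‖ := norm_le_add_norm_add _ _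
    _ ≤ b + c * (s * ‖p‖) := by
      rw [norm_smul_of_nonneg hc]
      gcongr
      exact S.le_of_opNorm_le hS p

theorem half_mul_min_le_of_le_div_add_div {a b e t : ℝ} (ha : 0 < a) (hb : 0 < b) (ht : 0 ≤ t)
    (h : e ≤ t / a + t / b) : e / 2 * min a b ≤ t := by
  have hm : 0 < min a b := lt_min ha hb
  have he : e ≤ t / min a b + t / min a b := by
    refine h.trans ?_
    gcongr
    exacts [min_le_left a b, min_le_right a b]
  rw [← le_div_iff₀ hm]
  linarith

theorem stmt2_general {ε ε_S S_max κ_T α L_H : ℝ} (hεS : ε_S < 1) (hSmax : 0 < S_max)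
    (hκT : 0 ≤ κ_T) (hα : 0 < α) (hLH : 0 < L_H) {g : E → E} {g' : E → E →L[ℝ] E}
    (hg : ∀ y, HasFDerivAt g (g' y) y) (hLip : ∀ x y, ‖g' y - g' x‖ ≤ L_H * ‖y - x‖)
    {x p : E} {S : E →L[ℝ] F}
    (ha : (1 - ε_S) * ‖g x + g' x p‖ ^ 2 ≤ ‖S (g x + g' x p)‖ ^ 2) (hb : ‖S‖ ≤ S_max)
    (hc : ‖S (g x + g' x p) + (1 / α * ‖p‖) • S p‖ ≤ κ_T * ‖p‖ ^ 2) (hd : ε ≤ ‖g (x + p)‖) :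
    ε / 2 * min (2 / L_H) (√(1 - ε_S) / (S_max / α + κ_T)) ≤ ‖p‖ ^ 2 := by
  have hσ : 0 < √(1 - ε_S) := Real.sqrt_pos.2 (sub_pos.2 hεS)
  refine half_mul_min_le_of_le_div_add_div (by positivity) (by positivity) (by positivity) ?_
  set v := g x + g' x p with hv
  have htaylor : ‖g (x + p) - v‖ ≤ ‖p‖ ^ 2 / (2 / L_H) :=
    calc ‖g (x + p) - v‖
      _ ≤ L_H / 2 * ‖p‖ ^ 2 := by
        rw [hv, ← sub_sub]
        exact norm_sub_sub_fderiv_le_of_lipschitz hg hLip x p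
      _ = ‖p‖ ^ 2 / (2 / L_H) := by field_simp
  have hsketch : √(1 - ε_S) * ‖v‖ ≤ (S_max / α + κ_T) * ‖p‖ ^ 2 :=
    calc √(1 - ε_S) * ‖v‖
      _ ≤ ‖S v‖ := by
        refine (sq_le_sq₀ (by positivity) (norm_nonneg _)).1 ?_
        rwa [mul_pow, Real.sq_sqrt (sub_nonneg.2 hεS.le)]
      _ ≤ κ_T * ‖p‖ ^ 2 + 1 / α * ‖p‖ * (S_max * ‖p‖) :=
        norm_map_le_of_norm_map_add_smul_le hb (by positivity) hc
      _ = (S_max / α + κ_T) * ‖p‖ ^ 2 := by ring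
  have hmodel : ‖v‖ ≤ ‖p‖ ^ 2 / (√(1 - ε_S) / (S_max / α + κ_T)) := by
    rw [div_div_eq_mul_div, le_div_iff₀ hσ]
    linarith
  calc ε
    _ ≤ ‖g (x + p)‖ := hd
    _ ≤ ‖g (x + p) - v‖ + ‖v‖ := norm_le_norm_sub_add _ _
    _ ≤ _ := add_le_add htaylor hmodel

end NormedSpace

section Euclidean

open WithLp (toLp)

variable {m n : ℕ}

theorem enorm_eq_norm_toLp (v : Fin n → ℝ) : enorm v = ‖toLp 2 v‖ := by
  simp [enorm, EuclideanSpace.norm_eq]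

/-- The operator between Euclidean spaces defined by a rectangular matrix, whose operator norm is
`opNorm`. The space `Fin n → ℝ` of the statement carries the sup norm, hence the change of type. -/
noncomputable def euclideanCLM (A : Matrix (Fin m) (Fin n) ℝ) :
    EuclideanSpace ℝ (Fin n) →L[ℝ] EuclideanSpace ℝ (Fin m) :=
  A.toEuclideanLin.toContinuousLinearMap

theorem euclideanCLM_toLp (A : Matrix (Fin m) (Fin n) ℝ) (v : Fin n → ℝ) :
    euclideanCLM A (toLp 2 v) = toLp 2 (A.mulVec v) :=
  rfl

theorem euclideanCLM_sub (A B : Matrix (Fin m) (Fin n) ℝ) :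
    euclideanCLM (A - B) = euclideanCLM A - euclideanCLM B := by
  simp only [euclideanCLM, map_sub]

theorem norm_euclideanCLM (A : Matrix (Fin m) (Fin n) ℝ) : ‖euclideanCLM A‖ = opNorm A := by
  have hle : ∀ c ∈ {c : ℝ | ∃ v : Fin n → ℝ, enorm v = 1 ∧ c = enorm (A.mulVec v)},
      c ≤ ‖euclideanCLM A‖ := by
    rintro _ ⟨v, hv, rfl⟩
    rw [enorm_eq_norm_toLp] at hv ⊢
    exact (euclideanCLM A).unit_le_opNorm _ hv.le
  refine le_antisymm ?_ (Real.sSup_le hle (norm_nonneg _))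
  have hnonneg : 0 ≤ opNorm A := Real.sSup_nonneg fun c ⟨_, _, hc⟩ => hc ▸ Real.sqrt_nonneg _
  refine ContinuousLinearMap.opNorm_le_of_unit_norm hnonneg fun u hu => le_csSup ⟨_, hle⟩ ?_
  exact ⟨u.ofLp, by rw [enorm_eq_norm_toLp, hu], (enorm_eq_norm_toLp _).symm⟩

theorem LipschitzHessian.norm_euclideanCLM_sub_le {f : (Fin n → ℝ) → ℝ} {L : ℝ}
    (h : LipschitzHessian f L) (x y : EuclideanSpace ℝ (Fin n)) :
    ‖euclideanCLM (hess f y.ofLp) - euclideanCLM (hess f x.ofLp)‖ ≤ L * ‖y - x‖ := by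
  rw [← euclideanCLM_sub, norm_euclideanCLM]
  simpa only [enorm_eq_norm_toLp, WithLp.toLp_sub, WithLp.toLp_ofLp] using h x.ofLp y.ofLp

theorem hess_apply {f : (Fin n → ℝ) → ℝ} {y : Fin n → ℝ}
    (hf : DifferentiableAt ℝ (fderiv ℝ f) y) (i j : Fin n) :
    hess f y i j = fderiv ℝ (fderiv ℝ f) y (Pi.single i 1) (Pi.single j 1) := by
  simp [hess, fderiv_clm_apply hf (differentiableAt_const _)]

theorem hess_mulVec_apply {f : (Fin n → ℝ) → ℝ} {y : Fin n → ℝ} (hf : ContDiffAt ℝ 2 f y)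
    (w : Fin n → ℝ) (i : Fin n) :
    (hess f y).mulVec w i = fderiv ℝ (fderiv ℝ f) y w (Pi.single i 1) := by
  have hsymm : IsSymmSndFDerivAt ℝ f y := hf.isSymmSndFDerivAt (by simp)
  rw [hsymm w (Pi.single i 1)]
  conv_rhs => rw [pi_eq_sum_univ' w]
  simp [Matrix.mulVec, dotProduct, hess_apply (differentiableAt_fderiv_of_contDiffAt_two hf),
    mul_comm]

theorem hasFDerivAt_toLp_grad {f : (Fin n → ℝ) → ℝ} {y : EuclideanSpace ℝ (Fin n)}
    (hf : ContDiffAt ℝ 2 f y.ofLp) :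
    HasFDerivAt (fun z : EuclideanSpace ℝ (Fin n) => toLp 2 (grad f z.ofLp))
      (euclideanCLM (hess f y.ofLp)) y := by
  rw [← hasFDerivWithinAt_univ, hasFDerivWithinAt_piLp]
  intro i
  have hfderiv := (differentiableAt_fderiv_of_contDiffAt_two hf).hasFDerivAt.comp y
    (PiLp.hasFDerivAt_ofLp 2 y)
  have hpartial := hfderiv.clm_apply (hasFDerivAt_const (Pi.single i (1 : ℝ)) y)
  refine (hpartial.congr_fderiv ?_).hasFDerivWithinAt
  ext w
  rw [ContinuousLinearMap.comp_zero, zero_add]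
  exact (hess_mulVec_apply hf w.ofLp i).symm

theorem augM_mulVec_cons (f : (Fin n → ℝ) → ℝ) (x : Fin n → ℝ) (t : ℝ) (w : Fin n → ℝ) :
    (augM f x).mulVec (Fin.cons t w) = t • grad f x + (hess f x).mulVec w := by
  ext i
  simp [augM, Matrix.mulVec, dotProduct, Fin.sum_univ_succ, mul_comm]

end Euclidean

theorem stmt2 {d l : ℕ} (ε ε_S S_max κ_T α L_H : ℝ)
    (hε : 0 < ε) (hεS : ε_S ∈ Set.Ioo (0:ℝ) 1) (hSmax : 0 < S_max) (hκT : 0 ≤ κ_T)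
    (hα : 0 < α) (hLH : 0 < L_H)
    (f : (Fin d → ℝ) → ℝ) (hf : ContDiff ℝ 2 f) (hLip : LipschitzHessian f L_H)
    (x : Fin d → ℝ) (S : Matrix (Fin l) (Fin d) ℝ) (sh : Fin l → ℝ)
    (ha : ∀ z : Fin (d+1) → ℝ,
      enorm (S.mulVec ((augM f x).mulVec z)) ^ 2
        ≥ (1 - ε_S) * enorm ((augM f x).mulVec z) ^ 2)
    (hb : opNorm S ≤ S_max)
    (hc : enorm (S.mulVec (grad f x) + (S * hess f x * S.transpose).mulVec sh
            + ((1/α) * enorm (S.transpose.mulVec sh)) • (S * S.transpose).mulVec sh)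
          ≤ κ_T * enorm (S.transpose.mulVec sh) ^ 2)
    (hd : enorm (grad f (x + S.transpose.mulVec sh)) ≥ ε) :
    enorm (S.transpose.mulVec sh) ^ 2
      ≥ (ε/2) * min (2 / L_H) (Real.sqrt (1 - ε_S) / (S_max / α + κ_T)) := by
  have hM := ha (Fin.cons 1 (S.transpose.mulVec sh))
  rw [augM_mulVec_cons, one_smul] at hM
  rw [Matrix.mul_assoc] at hc
  simp only [← Matrix.mulVec_mulVec, ← Matrix.mulVec_add, enorm_eq_norm_toLp] at hM hc hd ⊢
  exact stmt2_general hεS.2 hSmax hκT hα hLH (fun y => hasFDerivAt_toLp_grad hf.contDiffAt)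
    hLip.norm_euclideanCLM_sub_le (x := .toLp 2 x) hM ((norm_euclideanCLM S).trans_le hb) hc hd

end RARC
end

section
/- Let l, d be positive integers, let S ∈ ℝ^{l×d} be a scaled Gaussian matrix, and let δ ∈ (0,1). Then with probability at least 1 − δ one has ‖S‖ ≤ 1 + √(d/l) + √(2·ln(1/δ)/l), where ‖S‖ is the ℓ₂ operator norm of S. -/
open scoped BigOperators NNReal
open MeasureTheory ProbabilityTheory

namespace RARC

/-! Let `G` be a standard Gaussian `m × n` matrix and `g`, `h`, `γ` independent standard Gaussians
in `ℝ^m`, `ℝ^n`, `ℝ`. On pairs of unit vectors the processes `⟨u, G v⟩ + γ` and `⟨u, g⟩ + ⟨v, h⟩`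
both have variance `2`, and their covariances `⟨u, u'⟩⟨v, v'⟩ + 1` and `⟨u, u'⟩ + ⟨v, v'⟩` differ by
`(1 - ⟨u, u'⟩)(1 - ⟨v, v'⟩) ≥ 0`. Slepian's lemma, which follows by integrating by parts along a
rotation from one Gaussian vector to the other, therefore shows that `‖g‖ + ‖h‖` stochastically
dominates `‖G‖ + γ`. Comparing exponential moments, the factor `E exp (t γ) = exp (t² / 2)` cancels
against one of the two such factors in `E exp (t ‖g‖) ≤ exp (t √m + t² / 2)` and its analogue for
`h`, which leaves `E exp (t ‖G‖) ≤ exp (t (√m + √n) + t² / 2)`. Chernoff's bound with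
`t = √(2 log (1 / δ))` gives the sharp constants. -/

section RandomMatrixTail

open Filter Topology Finset Real
open scoped ENNReal Matrix Matrix.Norms.L2Operator

section IntegrationByParts

variable {κ : Type*} [Fintype κ]

/-- The standard Gaussian measure on `κ → ℝ`, with independent `N(0, 1)` coordinates. -/
noncomputable abbrev gaussianPi (κ : Type*) [Fintype κ] : Measure (κ → ℝ) :=
  Measure.pi fun _ => gaussianReal 0 1

/-- The density of `gaussianPi κ` with respect to Lebesgue measure. -/
noncomputable def gaussianPiPDF (w : κ → ℝ) : ℝ := ∏ k, gaussianPDFReal 0 1 (w k)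

lemma gaussianPiPDF_nonneg (w : κ → ℝ) : 0 ≤ gaussianPiPDF w :=
  prod_nonneg fun _ _ => gaussianPDFReal_nonneg _ _ _

lemma measurable_gaussianPiPDF : Measurable (gaussianPiPDF (κ := κ)) :=
  Finset.measurable_prod _ fun k _ =>
    (measurable_gaussianPDFReal 0 1).comp (measurable_pi_apply k)

lemma gaussianPi_eq_withDensity :
    gaussianPi κ = volume.withDensity fun w => ENNReal.ofReal (gaussianPiPDF w) := by
  refine Measure.pi_eq fun s hs => ?_
  have integrable_density :
      Integrable gaussianPiPDF (Measure.pi fun k => (volume : Measure ℝ).restrict (s k)) :=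
    Integrable.fintype_prod fun _ => (integrable_gaussianPDFReal 0 1).restrict
  rw [withDensity_apply _ (MeasurableSet.univ_pi hs), volume_pi, Measure.restrict_pi_pi,
    ← ofReal_integral_eq_lintegral_ofReal integrable_density (.of_forall gaussianPiPDF_nonneg)]
  simp only [gaussianPiPDF]
  rw [integral_fintype_prod_eq_prod (f := fun _ => gaussianPDFReal 0 1),
    ENNReal.ofReal_prod_of_nonneg
      fun _ _ => integral_nonneg fun _ => gaussianPDFReal_nonneg _ _ _]
  exact prod_congr rfl fun _ _ => (gaussianReal_apply_eq_integral _ one_ne_zero _).symm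

lemma integral_gaussianPi (f : (κ → ℝ) → ℝ) :
    ∫ w, f w ∂gaussianPi κ = ∫ w, f w * gaussianPiPDF w := by
  rw [gaussianPi_eq_withDensity, integral_withDensity_eq_integral_toReal_smul
    measurable_gaussianPiPDF.ennreal_ofReal (by simp)]
  simp only [ENNReal.toReal_ofReal (gaussianPiPDF_nonneg _), smul_eq_mul, mul_comm]

lemma integrable_gaussianPi_iff {f : (κ → ℝ) → ℝ} :
    Integrable f (gaussianPi κ) ↔ Integrable fun w => f w * gaussianPiPDF w := by
  rw [gaussianPi_eq_withDensity,
    integrable_withDensity_iff measurable_gaussianPiPDF.ennreal_ofReal (by simp)]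
  simp only [ENNReal.toReal_ofReal (gaussianPiPDF_nonneg _)]

lemma gaussianPiPDF_eq (w : κ → ℝ) :
    gaussianPiPDF w = (√(2 * π))⁻¹ ^ Fintype.card κ * exp (-(w ⬝ᵥ w / 2)) := by
  simp only [gaussianPiPDF, gaussianPDFReal, prod_mul_distrib, ← exp_sum]
  simp [dotProduct, sum_div, neg_div, pow_two]

lemma hasLineDerivAt_gaussianPiPDF (w c : κ → ℝ) :
    HasLineDerivAt ℝ gaussianPiPDF (-(c ⬝ᵥ w) * gaussianPiPDF w) w c := by
  have expand (t : ℝ) : (w + t • c) ⬝ᵥ (w + t • c) =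
      w ⬝ᵥ w + t * (2 * (c ⬝ᵥ w)) + t ^ 2 * (c ⬝ᵥ c) := by
    simp only [add_dotProduct, dotProduct_add, smul_dotProduct, dotProduct_smul, smul_eq_mul,
      dotProduct_comm w c]
    ring
  have deriv_exponent :
      HasDerivAt (fun t : ℝ => -((w + t • c) ⬝ᵥ (w + t • c) / 2)) (-(c ⬝ᵥ w)) 0 := by
    simp only [expand]
    refine (((((hasDerivAt_id (0 : ℝ)).mul_const _).const_add _).add
      ((hasDerivAt_pow 2 (0 : ℝ)).mul_const _)).div_const 2).neg.congr_deriv ?_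
    simp
  simp only [HasLineDerivAt, gaussianPiPDF_eq]
  refine (deriv_exponent.exp.const_mul _).congr_deriv ?_
  simp only [zero_smul, add_zero]
  ring

/-- **Gaussian integration by parts** (Stein's identity). -/
theorem integral_dotProduct_mul_gaussianPi {F F' : (κ → ℝ) → ℝ} {c : κ → ℝ}
    (hF : Integrable F (gaussianPi κ)) (hF' : Integrable F' (gaussianPi κ))
    (hcF : Integrable (fun w => (c ⬝ᵥ w) * F w) (gaussianPi κ))
    (hderiv : ∀ w, HasLineDerivAt ℝ F (F' w) w c) :
    ∫ w, (c ⬝ᵥ w) * F w ∂gaussianPi κ = ∫ w, F' w ∂gaussianPi κ := by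
  rw [integrable_gaussianPi_iff] at hF hF' hcF
  have by_parts : ∫ w, F w * (-(c ⬝ᵥ w) * gaussianPiPDF w) = -∫ w, F' w * gaussianPiPDF w :=
    integral_bilinear_hasLineDerivAt_right_eq_neg_left_of_integrable
      (B := ContinuousLinearMap.mul ℝ ℝ) hF'
      (hcF.neg.congr (.of_forall fun w => by simp; ring)) hF
      (fun w _ => hderiv w) fun w _ => hasLineDerivAt_gaussianPiPDF w c
  rw [integral_gaussianPi, integral_gaussianPi, ← neg_inj, ← by_parts, ← integral_neg]
  exact integral_congr_ae (.of_forall fun w => by ring)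

lemma integrable_eval_gaussianPi (k : κ) : Integrable (fun w : κ → ℝ => w k) (gaussianPi κ) :=
  integrable_eval IsGaussian.integrable_id

lemma integrable_dotProduct_gaussianPi (c : κ → ℝ) :
    Integrable (fun w => c ⬝ᵥ w) (gaussianPi κ) :=
  integrable_finsetSum _ fun k _ => (integrable_eval_gaussianPi k).const_mul (c k)

end IntegrationByParts

section Interpolation

variable {I κ : Type*} [Fintype κ]

/-- The path `cos θ • B + sin θ • A` from `B` at `θ = 0` to `A` at `θ = π / 2`; applied to a
Gaussian vector with `A * Bᵀ = 0` it interpolates between independent vectors `B w` and `A w`. -/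
noncomputable def rotationPath (A B : Matrix I κ ℝ) (θ : ℝ) : Matrix I κ ℝ :=
  cos θ • B + sin θ • A

lemma rotationPath_add_pi_div_two_mul_transpose {A B : Matrix I κ ℝ} (hAB : A * Bᵀ = 0) (θ : ℝ) :
    rotationPath A B (θ + π / 2) * (rotationPath A B θ)ᵀ =
      (sin θ * cos θ) • (A * Aᵀ - B * Bᵀ) := by
  have hBA : B * Aᵀ = 0 := by simpa using congrArg Matrix.transpose hAB
  simp only [rotationPath, cos_add_pi_div_two, sin_add_pi_div_two, Matrix.transpose_add,
    Matrix.transpose_smul, Matrix.add_mul, Matrix.mul_add, Matrix.smul_mul, Matrix.mul_smul,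
    hAB, hBA]
  module

lemma abs_rotationPath_mulVec_le (A B : Matrix I κ ℝ) (w : κ → ℝ) (θ : ℝ) (i : I) :
    |(rotationPath A B θ *ᵥ w) i| ≤ |(B *ᵥ w) i| + |(A *ᵥ w) i| := by
  simp only [rotationPath, Matrix.add_mulVec, Matrix.smul_mulVec, Pi.add_apply, Pi.smul_apply,
    smul_eq_mul]
  refine (abs_add_le _ _).trans ?_
  rw [abs_mul, abs_mul]
  exact add_le_add (mul_le_of_le_one_left (abs_nonneg _) (abs_cos_le_one θ))
    (mul_le_of_le_one_left (abs_nonneg _) (abs_sin_le_one θ))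

lemma hasDerivAt_rotationPath_mulVec [Finite I] (A B : Matrix I κ ℝ) (w : κ → ℝ) (θ : ℝ) :
    HasDerivAt (fun θ => rotationPath A B θ *ᵥ w) (rotationPath A B (θ + π / 2) *ᵥ w) θ := by
  have := Fintype.ofFinite I
  simp only [rotationPath, Matrix.add_mulVec, Matrix.smul_mulVec, cos_add_pi_div_two,
    sin_add_pi_div_two]
  exact ((hasDerivAt_cos θ).smul_const (B *ᵥ w)).add ((hasDerivAt_sin θ).smul_const (A *ᵥ w))

variable [Fintype I]

/-- `F` is a bounded differentiable function whose partial derivatives `F' i` are continuous and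
bounded: the regularity under which Gaussian integrals of `F` can be differentiated and integrated
by parts. -/
structure HasBoundedPartials (F : (I → ℝ) → ℝ) (F' : I → (I → ℝ) → ℝ) : Prop where
  hasFDerivAt (x : I → ℝ) :
    HasFDerivAt F (∑ i, F' i x • ContinuousLinearMap.proj (R := ℝ) (φ := fun _ : I => ℝ) i) x
  continuous_partial (i : I) : Continuous (F' i)
  exists_abs_le : ∃ M, ∀ x, |F x| ≤ M
  exists_abs_partial_le : ∃ M, ∀ i x, |F' i x| ≤ M

namespace HasBoundedPartials

variable {F : (I → ℝ) → ℝ} {F' : I → (I → ℝ) → ℝ}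

lemma continuous (hF : HasBoundedPartials F F') : Continuous F :=
  continuous_iff_continuousAt.2 fun x => (hF.hasFDerivAt x).continuousAt

lemma hasDerivAt_comp (hF : HasBoundedPartials F F') {x : ℝ → I → ℝ} {x' : I → ℝ} {t : ℝ}
    (hx : HasDerivAt x x' t) : HasDerivAt (fun t => F (x t)) (x' ⬝ᵥ fun i => F' i (x t)) t := by
  refine ((hF.hasFDerivAt (x t)).comp_hasDerivAt t hx).congr_deriv ?_
  simp [dotProduct, mul_comm]

lemma integrable_comp_mulVec (hF : HasBoundedPartials F F') (C : Matrix I κ ℝ) :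
    Integrable (fun w => F (C *ᵥ w)) (gaussianPi κ) := by
  obtain ⟨M, hM⟩ := hF.exists_abs_le
  exact .of_bound (hF.continuous.comp (by fun_prop)).aestronglyMeasurable M
    (.of_forall fun w => hM _)

lemma integrable_partial_comp_mulVec (hF : HasBoundedPartials F F') (C : Matrix I κ ℝ) (i : I) :
    Integrable (fun w => F' i (C *ᵥ w)) (gaussianPi κ) := by
  obtain ⟨M, hM⟩ := hF.exists_abs_partial_le
  exact .of_bound ((hF.continuous_partial i).comp (by fun_prop)).aestronglyMeasurable M
    (.of_forall fun w => hM i _)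

lemma integrable_dotProduct_mul_comp_mulVec (hF : HasBoundedPartials F F') (C : Matrix I κ ℝ)
    (c : κ → ℝ) : Integrable (fun w => (c ⬝ᵥ w) * F (C *ᵥ w)) (gaussianPi κ) := by
  obtain ⟨M, hM⟩ := hF.exists_abs_le
  exact (integrable_dotProduct_gaussianPi c).mul_bdd
    (hF.continuous.comp (by fun_prop)).aestronglyMeasurable (.of_forall fun w => hM _)

lemma integral_dotProduct_mul_comp_mulVec (hF : HasBoundedPartials F F') (C : Matrix I κ ℝ)
    (c : κ → ℝ) :
    ∫ w, (c ⬝ᵥ w) * F (C *ᵥ w) ∂gaussianPi κ =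
      ∑ j, (C *ᵥ c) j * ∫ w, F' j (C *ᵥ w) ∂gaussianPi κ := by
  have integrable_summand (j : I) :
      Integrable (fun w => (C *ᵥ c) j * F' j (C *ᵥ w)) (gaussianPi κ) :=
    (hF.integrable_partial_comp_mulVec C j).const_mul _
  have hasLineDerivAt (w : κ → ℝ) :
      HasLineDerivAt ℝ (fun w => F (C *ᵥ w)) (∑ j, (C *ᵥ c) j * F' j (C *ᵥ w)) w c := by
    have path : HasDerivAt (fun t : ℝ => C *ᵥ (w + t • c)) (C *ᵥ c) 0 := by
      simp only [Matrix.mulVec_add, Matrix.mulVec_smul]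
      simpa using ((hasDerivAt_id (0 : ℝ)).smul_const (C *ᵥ c)).const_add (C *ᵥ w)
    simpa [HasLineDerivAt, dotProduct] using hF.hasDerivAt_comp path
  rw [integral_dotProduct_mul_gaussianPi (hF.integrable_comp_mulVec C)
    (integrable_finsetSum _ fun j _ => integrable_summand j)
    (hF.integrable_dotProduct_mul_comp_mulVec C c) hasLineDerivAt,
    integral_finsetSum _ fun j _ => integrable_summand j]
  simp only [integral_const_mul]

lemma hasDerivAt_integral_rotationPath (hF : HasBoundedPartials F F') (A B : Matrix I κ ℝ)
    (θ : ℝ) :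
    HasDerivAt (fun θ => ∫ w, F (rotationPath A B θ *ᵥ w) ∂gaussianPi κ)
      (∫ w, (rotationPath A B (θ + π / 2) *ᵥ w) ⬝ᵥ (fun i => F' i (rotationPath A B θ *ᵥ w))
        ∂gaussianPi κ) θ := by
  obtain ⟨M, hM⟩ := hF.exists_abs_partial_le
  have dominating_integrable :
      Integrable (fun w => ∑ i, (|(B *ᵥ w) i| + |(A *ᵥ w) i|) * M) (gaussianPi κ) :=
    integrable_finsetSum _ fun i _ => ((integrable_dotProduct_gaussianPi (B i)).abs.add
      (integrable_dotProduct_gaussianPi (A i)).abs).mul_const M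
  refine (hasDerivAt_integral_of_dominated_loc_of_deriv_le univ_mem
    (.of_forall fun θ => (hF.integrable_comp_mulVec _).aestronglyMeasurable)
    (hF.integrable_comp_mulVec _) ?_ (.of_forall fun w φ _ => ?_) dominating_integrable
    (.of_forall fun w φ _ => hF.hasDerivAt_comp (hasDerivAt_rotationPath_mulVec A B w φ))).2
  · have := hF.continuous_partial
    exact Continuous.aestronglyMeasurable (by fun_prop)
  · refine (abs_sum_le_sum_abs _ _).trans (sum_le_sum fun i _ => ?_)
    rw [abs_mul]
    exact mul_le_mul (abs_rotationPath_mulVec_le A B w _ i) (hM i _) (abs_nonneg _) (by positivity)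

lemma integral_rotationPath_dotProduct_partials {F'' : I → I → (I → ℝ) → ℝ}
    (hF' : ∀ i, HasBoundedPartials (F' i) (F'' i)) {A B : Matrix I κ ℝ} (hAB : A * Bᵀ = 0)
    (θ : ℝ) :
    ∫ w, (rotationPath A B (θ + π / 2) *ᵥ w) ⬝ᵥ (fun i => F' i (rotationPath A B θ *ᵥ w))
        ∂gaussianPi κ =
      sin θ * cos θ * ∑ i, ∑ j, (A * Aᵀ - B * Bᵀ) i j *
        ∫ w, F'' i j (rotationPath A B θ *ᵥ w) ∂gaussianPi κ := by
  have covariance (i j : I) : (rotationPath A B θ *ᵥ rotationPath A B (θ + π / 2) i) j =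
      sin θ * cos θ * (A * Aᵀ - B * Bᵀ) i j := by
    rw [← smul_eq_mul, ← Matrix.smul_apply, ← rotationPath_add_pi_div_two_mul_transpose hAB]
    exact dotProduct_comm _ _
  have integrable_summand (i : I) : Integrable (fun w => (rotationPath A B (θ + π / 2) *ᵥ w) i *
      F' i (rotationPath A B θ *ᵥ w)) (gaussianPi κ) :=
    (hF' i).integrable_dotProduct_mul_comp_mulVec _ _
  simp only [dotProduct]
  rw [integral_finsetSum _ fun i _ => integrable_summand i, mul_sum]
  refine sum_congr rfl fun i _ => ((hF' i).integral_dotProduct_mul_comp_mulVec _ _).trans ?_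
  simp only [covariance, mul_sum, mul_assoc]

lemma integral_comp_mulVec_le_of_mul_transpose_eq_zero {F'' : I → I → (I → ℝ) → ℝ}
    (hF : HasBoundedPartials F F')
    (hF' : ∀ i, HasBoundedPartials (F' i) (F'' i)) {A B : Matrix I κ ℝ} (hAB : A * Bᵀ = 0)
    (hcov : ∀ i j x, 0 ≤ (A * Aᵀ - B * Bᵀ) i j * F'' i j x) :
    ∫ w, F (B *ᵥ w) ∂gaussianPi κ ≤ ∫ w, F (A *ᵥ w) ∂gaussianPi κ := by
  have hderiv := hF.hasDerivAt_integral_rotationPath A B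
  have monotone : MonotoneOn (fun θ => ∫ w, F (rotationPath A B θ *ᵥ w) ∂gaussianPi κ)
      (Set.Icc 0 (π / 2)) := by
    refine monotoneOn_of_hasDerivWithinAt_nonneg (convex_Icc _ _)
      (fun θ _ => (hderiv θ).continuousAt.continuousWithinAt)
      (fun θ _ => (hderiv θ).hasDerivWithinAt) fun θ hθ => ?_
    rw [interior_Icc] at hθ
    rw [integral_rotationPath_dotProduct_partials hF' hAB]
    have hsin : 0 ≤ sin θ := sin_nonneg_of_nonneg_of_le_pi hθ.1.le (by linarith [hθ.2, pi_pos])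
    have hcos : 0 ≤ cos θ := cos_nonneg_of_mem_Icc ⟨by linarith [hθ.1, pi_pos], hθ.2.le⟩
    refine mul_nonneg (mul_nonneg hsin hcos) (sum_nonneg fun i _ => sum_nonneg fun j _ => ?_)
    rw [← integral_const_mul]
    exact integral_nonneg fun w => hcov i j _
  have hπ : (0 : ℝ) ≤ π / 2 := by positivity
  simpa [rotationPath] using monotone (Set.left_mem_Icc.2 hπ) (Set.right_mem_Icc.2 hπ) hπ

end HasBoundedPartials

end Interpolation

section Comparison

variable {I κ ι : Type*} [Fintype κ] [Fintype ι]

lemma measurePreserving_sumArrow_gaussianPi :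
    MeasurePreserving (Equiv.sumArrowEquivProdArrow κ ι ℝ) (gaussianPi (κ ⊕ ι))
      ((gaussianPi κ).prod (gaussianPi ι)) :=
  measurePreserving_sumPiEquivProdPi (X := fun _ : κ ⊕ ι => ℝ) fun _ => gaussianReal 0 1

lemma measurePreserving_comp_inl_gaussianPi :
    MeasurePreserving (fun w : κ ⊕ ι → ℝ => w ∘ Sum.inl) (gaussianPi (κ ⊕ ι)) (gaussianPi κ) :=
  measurePreserving_fst.comp measurePreserving_sumArrow_gaussianPi

lemma measurePreserving_comp_inr_gaussianPi :
    MeasurePreserving (fun w : κ ⊕ ι → ℝ => w ∘ Sum.inr) (gaussianPi (κ ⊕ ι)) (gaussianPi ι) :=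
  measurePreserving_snd.comp measurePreserving_sumArrow_gaussianPi

lemma hasFDerivAt_exp_mul_sub [Finite I] (β : ℝ) (c : I → ℝ) (i : I) (x : I → ℝ) :
    HasFDerivAt (fun x : I → ℝ => exp (β * x i - c i)) ((exp (β * x i - c i) * β) •
      ContinuousLinearMap.proj (R := ℝ) (φ := fun _ : I => ℝ) i) x := by
  have := Fintype.ofFinite I
  rw [mul_smul]
  exact (((hasFDerivAt_apply i x).const_mul β).sub_const (c i)).exp

variable [Fintype I]

/-- **Kahane's comparison inequality** for Gaussian vectors. -/
theorem HasBoundedPartials.integral_comp_mulVec_le {F : (I → ℝ) → ℝ} {F' : I → (I → ℝ) → ℝ}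
    {F'' : I → I → (I → ℝ) → ℝ} (hF : HasBoundedPartials F F')
    (hF' : ∀ i, HasBoundedPartials (F' i) (F'' i)) {A : Matrix I κ ℝ} {B : Matrix I ι ℝ}
    (hcov : ∀ i j x, 0 ≤ (A * Aᵀ - B * Bᵀ) i j * F'' i j x) :
    ∫ w, F (B *ᵥ w) ∂gaussianPi ι ≤ ∫ w, F (A *ᵥ w) ∂gaussianPi κ := by
  -- Padding with zero columns turns `A w` and `B w` into independent images of one Gaussian vector.
  let A₀ : Matrix I (κ ⊕ ι) ℝ := Matrix.fromCols A 0
  let B₀ : Matrix I (κ ⊕ ι) ℝ := Matrix.fromCols 0 B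
  have integral_A : ∫ w, F (A₀ *ᵥ w) ∂gaussianPi (κ ⊕ ι) = ∫ w, F (A *ᵥ w) ∂gaussianPi κ := by
    have continuous_comp : Continuous fun w => F (A *ᵥ w) := hF.continuous.comp (by fun_prop)
    rw [← (measurePreserving_comp_inl_gaussianPi (κ := κ) (ι := ι)).map_eq,
      integral_map
        measurePreserving_comp_inl_gaussianPi.aemeasurable continuous_comp.aestronglyMeasurable]
    simp [A₀, Matrix.fromCols_mulVec]
  have integral_B : ∫ w, F (B₀ *ᵥ w) ∂gaussianPi (κ ⊕ ι) = ∫ w, F (B *ᵥ w) ∂gaussianPi ι := by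
    have continuous_comp : Continuous fun w => F (B *ᵥ w) := hF.continuous.comp (by fun_prop)
    rw [← (measurePreserving_comp_inr_gaussianPi (κ := κ) (ι := ι)).map_eq,
      integral_map
        measurePreserving_comp_inr_gaussianPi.aemeasurable continuous_comp.aestronglyMeasurable]
    simp [B₀, Matrix.fromCols_mulVec]
  rw [← integral_A, ← integral_B]
  refine hF.integral_comp_mulVec_le_of_mul_transpose_eq_zero hF' ?_ ?_
  · simp [A₀, B₀, Matrix.transpose_fromCols, Matrix.fromCols_mul_fromRows]
  · simpa [A₀, B₀, Matrix.transpose_fromCols, Matrix.fromCols_mul_fromRows] using hcov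

/-- A smooth approximation, for large `β`, of the indicator of the orthant
`{x | ∀ i, β * x i ≤ c i}`. -/
noncomputable def softOrthant (β : ℝ) (c x : I → ℝ) : ℝ := exp (-∑ i, exp (β * x i - c i))

lemma softOrthant_nonneg (β : ℝ) (c x : I → ℝ) : 0 ≤ softOrthant β c x := (exp_pos _).le

lemma softOrthant_le_one (β : ℝ) (c x : I → ℝ) : softOrthant β c x ≤ 1 :=
  exp_le_one_iff.2 (neg_nonpos.2 (sum_nonneg fun _ _ => (exp_pos _).le))

lemma pow_mul_exp_neg_le {z : ℝ} (hz : 0 ≤ z) (n : ℕ) : z ^ n * exp (-z) ≤ n.factorial := by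
  have := pow_div_factorial_le_exp z hz n
  rw [div_le_iff₀ (by positivity)] at this
  rw [exp_neg, mul_inv_le_iff₀ (exp_pos z), mul_comm]
  exact this

lemma exp_mul_softOrthant_le (β : ℝ) (c x : I → ℝ) (i : I) :
    exp (β * x i - c i) * softOrthant β c x ≤ 1 := by
  have hi := single_le_sum (f := fun i => exp (β * x i - c i))
    (fun _ _ => (exp_pos _).le) (mem_univ i)
  refine (mul_le_mul_of_nonneg_right hi (softOrthant_nonneg β c x)).trans ?_
  simpa [softOrthant] using
    pow_mul_exp_neg_le (sum_nonneg fun i _ => (exp_pos (β * x i - c i)).le) 1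

lemma exp_mul_exp_mul_softOrthant_le (β : ℝ) (c x : I → ℝ) (i j : I) :
    exp (β * x i - c i) * exp (β * x j - c j) * softOrthant β c x ≤ 2 := by
  have le_sum (i : I) := single_le_sum (f := fun i => exp (β * x i - c i))
    (fun _ _ => (exp_pos _).le) (mem_univ i)
  have nonneg_sum := sum_nonneg fun i (_ : i ∈ univ) => (exp_pos (β * x i - c i)).le
  refine (mul_le_mul_of_nonneg_right
    (mul_le_mul (le_sum i) (le_sum j) (exp_pos _).le nonneg_sum)
    (softOrthant_nonneg β c x)).trans ?_
  simpa [softOrthant, pow_two] using pow_mul_exp_neg_le nonneg_sum 2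

/-- The partial derivatives of `softOrthant β c`. -/
noncomputable def softOrthantPartial (β : ℝ) (c : I → ℝ) (i : I) (x : I → ℝ) : ℝ :=
  -β * (exp (β * x i - c i) * softOrthant β c x)

/-- The second partial derivatives of `softOrthant β c`. -/
noncomputable def softOrthantHessian [DecidableEq I] (β : ℝ) (c : I → ℝ) (i j : I) (x : I → ℝ) :
    ℝ :=
  β ^ 2 * (exp (β * x i - c i) * exp (β * x j - c j) * softOrthant β c x) -
    if j = i then β ^ 2 * (exp (β * x i - c i) * softOrthant β c x) else 0

lemma continuous_softOrthant (β : ℝ) (c : I → ℝ) : Continuous (softOrthant β c) := by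
  unfold softOrthant
  fun_prop

lemma abs_softOrthantPartial_le (β : ℝ) (c : I → ℝ) (i : I) (x : I → ℝ) :
    |softOrthantPartial β c i x| ≤ |β| := by
  rw [softOrthantPartial, abs_mul, abs_neg,
    abs_of_nonneg (mul_nonneg (exp_pos _).le (softOrthant_nonneg β c x))]
  exact mul_le_of_le_one_right (abs_nonneg β) (exp_mul_softOrthant_le β c x i)

lemma abs_softOrthantHessian_le [DecidableEq I] (β : ℝ) (c : I → ℝ) (i j : I) (x : I → ℝ) :
    |softOrthantHessian β c i j x| ≤ β ^ 2 * 3 := by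
  have h₁ := exp_mul_softOrthant_le β c x i
  have h₂ := exp_mul_exp_mul_softOrthant_le β c x i j
  have h₁' : 0 ≤ exp (β * x i - c i) * softOrthant β c x :=
    mul_nonneg (exp_pos _).le (softOrthant_nonneg β c x)
  have h₂' : 0 ≤ exp (β * x i - c i) * exp (β * x j - c j) * softOrthant β c x :=
    mul_nonneg (by positivity) (softOrthant_nonneg β c x)
  rw [softOrthantHessian, abs_le]
  split_ifs <;> constructor <;> nlinarith [sq_nonneg β]

lemma hasBoundedPartials_softOrthant (β : ℝ) (c : I → ℝ) :
    HasBoundedPartials (softOrthant β c) (softOrthantPartial β c) where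
  hasFDerivAt x := by
    refine (HasFDerivAt.fun_sum fun i _ => hasFDerivAt_exp_mul_sub β c i x).neg.exp.congr_fderiv ?_
    rw [← sum_neg_distrib, smul_sum]
    refine sum_congr rfl fun i _ => ?_
    rw [← neg_smul, smul_smul]
    simp only [softOrthantPartial, softOrthant, Pi.neg_apply]
    ring_nf
  continuous_partial i := by
    have := continuous_softOrthant β c
    unfold softOrthantPartial
    fun_prop
  exists_abs_le := ⟨1, fun x => by
    rw [abs_of_nonneg (softOrthant_nonneg β c x)]
    exact softOrthant_le_one β c x⟩
  exists_abs_partial_le := ⟨|β|, abs_softOrthantPartial_le β c⟩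

lemma hasBoundedPartials_softOrthantPartial [DecidableEq I] (β : ℝ) (c : I → ℝ) (i : I) :
    HasBoundedPartials (softOrthantPartial β c i) (softOrthantHessian β c i) where
  hasFDerivAt x := by
    refine (((hasFDerivAt_exp_mul_sub β c i x).mul
      ((hasBoundedPartials_softOrthant β c).hasFDerivAt x)).const_mul (-β)).congr_fderiv ?_
    ext v
    simp only [softOrthantHessian, softOrthantPartial, _root_.smul_apply,
      _root_.add_apply, _root_.sum_apply, smul_eq_mul, ContinuousLinearMap.proj_apply,
      sub_mul, sum_sub_distrib, ite_mul, zero_mul, sum_ite_eq', mem_univ, if_true, mul_add, mul_sum]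
    rw [sub_eq_add_neg]
    congr 1
    · exact sum_congr rfl fun j _ => by ring
    · ring
  continuous_partial j := by
    have := continuous_softOrthant β c
    unfold softOrthantHessian
    split_ifs <;> fun_prop
  exists_abs_le := ⟨|β|, abs_softOrthantPartial_le β c i⟩
  exists_abs_partial_le := ⟨β ^ 2 * 3, abs_softOrthantHessian_le β c i⟩

/-- The shift by `n` makes the limit equal to `1` also on the boundary of the orthant. -/
lemma tendsto_softOrthant (s x : I → ℝ) :
    Tendsto (fun n : ℕ => softOrthant ((n : ℝ) ^ 2) (fun i => (n : ℝ) ^ 2 * s i + n) x) atTop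
      (𝓝 (Set.indicator (Set.Iic s) 1 x)) := by
  have hn : Tendsto (fun n : ℕ => (n : ℝ)) atTop atTop := tendsto_natCast_atTop_atTop
  have exponent_eq (n : ℕ) (i : I) : (n : ℝ) ^ 2 * x i - ((n : ℝ) ^ 2 * s i + n) =
      n * (n * (x i - s i) - 1) := by ring
  simp only [softOrthant, exponent_eq]
  by_cases hx : x ∈ Set.Iic s
  · suffices h : ∀ i, Tendsto (fun n : ℕ => (n : ℝ) * (n * (x i - s i) - 1)) atTop atBot by
      simpa [Set.indicator_of_mem hx] using
        (tendsto_finsetSum univ fun i _ => tendsto_exp_atBot.comp (h i)).neg.rexp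
    intro i
    refine tendsto_atBot_mono (fun n => ?_) (tendsto_neg_atTop_atBot.comp hn)
    have : (n : ℝ) * (x i - s i) ≤ 0 :=
      mul_nonpos_of_nonneg_of_nonpos n.cast_nonneg (sub_nonpos.2 (hx i))
    simp only [Function.comp_apply]
    nlinarith [n.cast_nonneg (α := ℝ)]
  · obtain ⟨i, hi⟩ : ∃ i, s i < x i := by simpa [Pi.le_def] using hx
    rw [Set.indicator_of_notMem hx]
    have exponent_atTop : Tendsto (fun n : ℕ => (n : ℝ) * (n * (x i - s i) - 1)) atTop atTop :=
      hn.atTop_mul_atTop₀ (tendsto_atTop_add_const_right _ _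
        (hn.atTop_mul_const (sub_pos.2 hi)))
    refine tendsto_exp_atBot.comp (tendsto_neg_atTop_atBot.comp
      (tendsto_atTop_mono (fun n => ?_) (tendsto_exp_atTop.comp exponent_atTop)))
    exact single_le_sum (f := fun i => exp ((n : ℝ) * (n * (x i - s i) - 1)))
      (fun _ _ => (exp_pos _).le) (mem_univ i)

lemma tendsto_integral_softOrthant (s : I → ℝ) (A : Matrix I κ ℝ) :
    Tendsto (fun n : ℕ => ∫ w, softOrthant ((n : ℝ) ^ 2) (fun i => (n : ℝ) ^ 2 * s i + n) (A *ᵥ w)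
      ∂gaussianPi κ) atTop (𝓝 ((gaussianPi κ).real {w | A *ᵥ w ≤ s})) := by
  have measurableSet_le : MeasurableSet {w | A *ᵥ w ≤ s} :=
    (isClosed_Iic.preimage (by fun_prop : Continuous (A *ᵥ ·))).measurableSet
  rw [← integral_indicator_one measurableSet_le]
  refine tendsto_integral_of_dominated_convergence 1
    (fun n => ((continuous_softOrthant _ _).comp (by fun_prop)).aestronglyMeasurable)
    (integrable_const 1) (fun n => .of_forall fun w => ?_)
    (.of_forall fun w => tendsto_softOrthant s (A *ᵥ w))
  rw [norm_eq_abs, abs_of_nonneg (softOrthant_nonneg _ _ _)]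
  exact softOrthant_le_one _ _ _

/-- **Slepian's lemma** -/
theorem measure_mulVec_le_le_of_mul_transpose_le {I : Type*} [Finite I] {A : Matrix I κ ℝ}
    {B : Matrix I ι ℝ} (hvar : ∀ i, (A * Aᵀ) i i = (B * Bᵀ) i i)
    (hcov : ∀ i j, (B * Bᵀ) i j ≤ (A * Aᵀ) i j)
    (s : I → ℝ) :
    gaussianPi ι {w | B *ᵥ w ≤ s} ≤ gaussianPi κ {w | A *ᵥ w ≤ s} := by
  classical
  have := Fintype.ofFinite I
  rw [← ENNReal.toReal_le_toReal (measure_ne_top _ _) (measure_ne_top _ _)]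
  refine le_of_tendsto_of_tendsto' (tendsto_integral_softOrthant s B)
    (tendsto_integral_softOrthant s A) fun n =>
      (hasBoundedPartials_softOrthant _ _).integral_comp_mulVec_le
        (hasBoundedPartials_softOrthantPartial _ _) fun i j x => ?_
  rcases eq_or_ne j i with rfl | hij
  · simp [hvar]
  · rw [softOrthantHessian, if_neg hij, sub_zero]
    exact mul_nonneg (sub_nonneg.2 (hcov i j)) (mul_nonneg (sq_nonneg _)
      (mul_nonneg (by positivity) (softOrthant_nonneg _ _ _)))

theorem measure_forall_dotProduct_le_le_of_dotProduct_le {T : Type*} [TopologicalSpace T]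
    [TopologicalSpace.SeparableSpace T] {a : T → κ → ℝ} {b : T → ι → ℝ} {s : T → ℝ}
    (ha : Continuous a) (hs : Continuous s) (hvar : ∀ t, a t ⬝ᵥ a t = b t ⬝ᵥ b t)
    (hcov : ∀ t t', b t ⬝ᵥ b t' ≤ a t ⬝ᵥ a t') :
    gaussianPi ι {w | ∀ t, b t ⬝ᵥ w ≤ s t} ≤ gaussianPi κ {w | ∀ t, a t ⬝ᵥ w ≤ s t} := by
  obtain ⟨D, hD, dense_D⟩ := TopologicalSpace.exists_countable_dense T
  have : Countable D := hD
  have forall_eq_iInter : {w | ∀ t, a t ⬝ᵥ w ≤ s t} =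
      ⋂ S : Finset D, {w | ∀ t ∈ S, a t ⬝ᵥ w ≤ s t} := by
    ext w
    simp only [Set.mem_iInter, Set.mem_ofPred_eq]
    refine ⟨fun h S t _ => h t, fun h => ?_⟩
    have isClosed_constraint : IsClosed {t | a t ⬝ᵥ w ≤ s t} :=
      isClosed_le (ha.dotProduct continuous_const) hs
    exact isClosed_property dense_D.denseRange_val isClosed_constraint fun t =>
      h {t} t (mem_singleton_self t)
  have antitone : Antitone fun S : Finset D => {w : κ → ℝ | ∀ t ∈ S, a t ⬝ᵥ w ≤ s t} :=
    fun S S' hSS' w hw t ht => hw t (hSS' ht)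
  have measurableSet_forall (S : Finset D) :
      MeasurableSet {w : κ → ℝ | ∀ t ∈ S, a t ⬝ᵥ w ≤ s t} := by
    simp only [Set.ofPred_forall]
    exact S.measurableSet_biInter fun t _ =>
      (isClosed_le (by fun_prop) continuous_const).measurableSet
  rw [forall_eq_iInter, antitone.measure_iInter
    (fun S => (measurableSet_forall S).nullMeasurableSet) ⟨∅, measure_ne_top _ _⟩]
  refine le_iInf fun S => ?_
  have slepian := measure_mulVec_le_le_of_mul_transpose_le (A := Matrix.of fun t : S => a t)
    (B := Matrix.of fun t : S => b t) (fun t => hvar t) (fun t t' => hcov t t') fun t => s t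
  calc gaussianPi ι {w | ∀ t, b t ⬝ᵥ w ≤ s t}
      ≤ gaussianPi ι {w | ∀ t : S, b t ⬝ᵥ w ≤ s t} :=
        measure_mono fun w (hw : ∀ t, b t ⬝ᵥ w ≤ s t) t => hw t
    _ ≤ gaussianPi κ {w | ∀ t : S, a t ⬝ᵥ w ≤ s t} := slepian
    _ ≤ gaussianPi κ {w | ∀ t ∈ S, a t ⬝ᵥ w ≤ s t} := measure_mono fun w hw t ht => hw ⟨t, ht⟩

end Comparison

section OperatorNorm

variable {m n : Type*} [Fintype m] [Fintype n]

/-- The unit sphere of the Euclidean space `ℝ^m`. -/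
abbrev unitSphere (m : Type*) [Fintype m] : Set (EuclideanSpace ℝ m) := Metric.sphere 0 1

lemma sumElim_mul_dotProduct (u : m → ℝ) (v : n → ℝ) (w : (m × n) ⊕ Unit → ℝ) :
    Sum.elim (fun p : m × n => u p.1 * v p.2) 1 ⬝ᵥ w =
      u ⬝ᵥ (Matrix.of (Function.curry (w ∘ Sum.inl)) *ᵥ v) + w (Sum.inr ()) := by
  simp [dotProduct, Matrix.mulVec, Fintype.sum_prod_type, mul_sum, mul_assoc, mul_comm (v _)]

lemma sumElim_mul_dotProduct_sumElim_mul (u u' : m → ℝ) (v v' : n → ℝ) :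
    Sum.elim (fun p : m × n => u p.1 * v p.2) (1 : Unit → ℝ) ⬝ᵥ
      Sum.elim (fun p : m × n => u' p.1 * v' p.2) 1 = (u ⬝ᵥ u') * (v ⬝ᵥ v') + 1 := by
  simp [dotProduct, Fintype.sum_prod_type, sum_mul_sum, mul_mul_mul_comm]

lemma dotProduct_self_eq_norm_sq (x : m → ℝ) : x ⬝ᵥ x = ‖WithLp.toLp 2 x‖ ^ 2 := by
  simp [EuclideanSpace.norm_sq_eq, dotProduct, ← pow_two]

lemma unitSphere_dotProduct_self (u : unitSphere m) : u.1.ofLp ⬝ᵥ u.1.ofLp = 1 := by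
  rw [dotProduct_self_eq_norm_sq, WithLp.toLp_ofLp, norm_eq_of_mem_sphere, one_pow]

lemma unitSphere_dotProduct_le_norm (u : unitSphere m) (x : m → ℝ) :
    u.1.ofLp ⬝ᵥ x ≤ ‖WithLp.toLp 2 x‖ := by
  have := real_inner_le_norm (WithLp.toLp 2 x) u.1
  rwa [norm_eq_of_mem_sphere, mul_one] at this

lemma unitSphere_dotProduct_le_one (u u' : unitSphere m) : u.1.ofLp ⬝ᵥ u'.1.ofLp ≤ 1 := by
  simpa using unitSphere_dotProduct_le_norm u u'.1.ofLp

lemma nonempty_unitSphere [Nonempty m] : Nonempty (unitSphere m) := by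
  classical
  exact ⟨EuclideanSpace.single (Classical.arbitrary m) 1, by simp⟩

lemma l2_opNorm_le_of_forall_dotProduct_mulVec_le [DecidableEq n] [Nonempty m] [Nonempty n]
    {G : Matrix m n ℝ} {r : ℝ}
    (h : ∀ (u : unitSphere m) (v : unitSphere n), u.1.ofLp ⬝ᵥ (G *ᵥ v.1.ofLp) ≤ r) :
    ‖G‖ ≤ r := by
  obtain ⟨u⟩ := nonempty_unitSphere (m := m)
  obtain ⟨v⟩ := nonempty_unitSphere (m := n)
  have hr : 0 ≤ r := by
    have h₁ := h u v
    have h₂ := h (-u) v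
    simp only [coe_neg_sphere, WithLp.ofLp_neg, neg_dotProduct] at h₂
    linarith
  refine ContinuousLinearMap.opNorm_le_of_re_inner_le hr fun x y hx hy => ?_
  exact h ⟨y, by simpa using hy⟩ ⟨x, by simpa using hx⟩

/-- **Chevet's inequality** in its distributional form. The extra Gaussian coordinate on the right
equalizes the variances of the two processes, as Slepian's lemma requires. -/
theorem measure_norm_add_norm_le_le_measure_l2_opNorm_add_le [DecidableEq n] [Nonempty m]
    [Nonempty n] (r : ℝ) :
    gaussianPi (m ⊕ n) {w | ‖WithLp.toLp 2 (w ∘ Sum.inl)‖ + ‖WithLp.toLp 2 (w ∘ Sum.inr)‖ ≤ r} ≤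
      gaussianPi ((m × n) ⊕ Unit)
        {w | ‖Matrix.of (Function.curry (w ∘ Sum.inl))‖ + w (Sum.inr ()) ≤ r} := by
  let a (t : unitSphere m × unitSphere n) : (m × n) ⊕ Unit → ℝ :=
    Sum.elim (fun p => t.1.1.ofLp p.1 * t.2.1.ofLp p.2) 1
  let b (t : unitSphere m × unitSphere n) : m ⊕ n → ℝ := Sum.elim t.1.1.ofLp t.2.1.ofLp
  have continuous_a : Continuous a := continuous_pi fun k => by
    rcases k with p | _ <;> simp only [a, Sum.elim_inl, Sum.elim_inr] <;> fun_prop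
  have variance_eq (t : unitSphere m × unitSphere n) : a t ⬝ᵥ a t = b t ⬝ᵥ b t := by
    simp only [a, b]
    rw [sumElim_mul_dotProduct_sumElim_mul, sumElim_dotProduct_sumElim]
    simp only [unitSphere_dotProduct_self, mul_one]
  have covariance_le (t t' : unitSphere m × unitSphere n) : b t ⬝ᵥ b t' ≤ a t ⬝ᵥ a t' := by
    simp only [a, b]
    rw [sumElim_mul_dotProduct_sumElim_mul, sumElim_dotProduct_sumElim]
    linarith [mul_nonneg (sub_nonneg.2 (unitSphere_dotProduct_le_one t.1 t'.1))
      (sub_nonneg.2 (unitSphere_dotProduct_le_one t.2 t'.2))]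
  calc gaussianPi (m ⊕ n) {w | ‖WithLp.toLp 2 (w ∘ Sum.inl)‖ + ‖WithLp.toLp 2 (w ∘ Sum.inr)‖ ≤ r}
      ≤ gaussianPi (m ⊕ n) {w | ∀ t, b t ⬝ᵥ w ≤ r} := measure_mono fun w hw t => by
        rw [← Sum.elim_comp_inl_inr w, sumElim_dotProduct_sumElim]
        exact (add_le_add (unitSphere_dotProduct_le_norm t.1 _)
          (unitSphere_dotProduct_le_norm t.2 _)).trans hw
    _ ≤ gaussianPi ((m × n) ⊕ Unit) {w | ∀ t, a t ⬝ᵥ w ≤ r} :=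
        measure_forall_dotProduct_le_le_of_dotProduct_le continuous_a continuous_const variance_eq
          covariance_le
    _ ≤ _ := measure_mono fun w hw => by
        refine le_sub_iff_add_le.1 (l2_opNorm_le_of_forall_dotProduct_mulVec_le fun u v => ?_)
        exact le_sub_iff_add_le.2 ((sumElim_mul_dotProduct _ _ w).symm.trans_le (hw (u, v)))

end OperatorNorm

section ExponentialMoments

lemma setOf_lt_exp_mul_eq_compl {Ω : Type*} {X : Ω → ℝ} {s t : ℝ} (ht : 0 < t) (hs : 0 < s) :
    {ω | s < exp (t * X ω)} = {ω | X ω ≤ log s / t}ᶜ := by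
  ext ω
  simp only [Set.mem_compl_iff, Set.mem_ofPred_eq, not_le, div_lt_iff₀' ht, log_lt_iff_lt_exp hs]

lemma lintegral_exp_mul_le_of_measure_le_le {Ω Ω' : Type*} [MeasurableSpace Ω]
    [MeasurableSpace Ω'] {μ : Measure Ω} {ν : Measure Ω'} [IsProbabilityMeasure μ]
    [IsProbabilityMeasure ν] {X : Ω → ℝ} {Y : Ω' → ℝ} (hX : Measurable X) (hY : Measurable Y)
    (h : ∀ r, ν {ω | Y ω ≤ r} ≤ μ {ω | X ω ≤ r}) {t : ℝ} (ht : 0 < t) :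
    ∫⁻ ω, ENNReal.ofReal (exp (t * X ω)) ∂μ ≤ ∫⁻ ω, ENNReal.ofReal (exp (t * Y ω)) ∂ν := by
  rw [lintegral_eq_lintegral_meas_lt μ (.of_forall fun _ => (exp_pos _).le)
      (hX.const_mul t).exp.aemeasurable,
    lintegral_eq_lintegral_meas_lt ν (.of_forall fun _ => (exp_pos _).le)
      (hY.const_mul t).exp.aemeasurable]
  refine setLIntegral_mono' measurableSet_Ioi fun s hs => ?_
  rw [setOf_lt_exp_mul_eq_compl ht hs, setOf_lt_exp_mul_eq_compl ht hs,
    prob_compl_eq_one_sub (measurableSet_le hX measurable_const),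
    prob_compl_eq_one_sub (measurableSet_le hY measurable_const)]
  exact tsub_le_tsub_left (h _) 1

variable {κ ι : Type*} [Fintype κ] [Fintype ι]

lemma lintegral_exp_mul_add_gaussianPi {f : (κ → ℝ) → ℝ} {g : (ι → ℝ) → ℝ} (hf : Measurable f)
    (hg : Measurable g) (t : ℝ) :
    ∫⁻ w, ENNReal.ofReal (exp (t * (f (w ∘ Sum.inl) + g (w ∘ Sum.inr)))) ∂gaussianPi (κ ⊕ ι) =
      (∫⁻ w, ENNReal.ofReal (exp (t * f w)) ∂gaussianPi κ) *
        ∫⁻ w, ENNReal.ofReal (exp (t * g w)) ∂gaussianPi ι := by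
  rw [← lintegral_prod_mul (by fun_prop) (by fun_prop),
    ← measurePreserving_sumArrow_gaussianPi.lintegral_comp (by fun_prop)]
  refine lintegral_congr fun w => ?_
  rw [← ENNReal.ofReal_mul (exp_pos _).le, ← exp_add, mul_add]
  rfl

lemma lintegral_exp_mul_eval_gaussianPi (k : κ) (t : ℝ) :
    ∫⁻ w, ENNReal.ofReal (exp (t * w k)) ∂gaussianPi κ = ENNReal.ofReal (exp (t ^ 2 / 2)) := by
  have mgf_eq : ∫ x, exp (t * x) ∂gaussianReal 0 1 = exp (t ^ 2 / 2) := by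
    simpa [mgf] using congrFun (mgf_id_gaussianReal (μ := 0) (v := 1)) t
  have integrable := integrable_exp_mul_gaussianReal (μ := 0) (v := 1) t
  calc ∫⁻ w, ENNReal.ofReal (exp (t * w k)) ∂gaussianPi κ
      = ∫⁻ x, ENNReal.ofReal (exp (t * x)) ∂gaussianReal 0 1 :=
        (measurePreserving_eval (fun _ : κ => gaussianReal 0 1) k).lintegral_comp
          (f := fun x => ENNReal.ofReal (exp (t * x))) (by fun_prop)
    _ = ENNReal.ofReal (exp (t ^ 2 / 2)) := by
        rw [← ofReal_integral_eq_lintegral_ofReal integrable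
          (.of_forall fun _ => (exp_pos _).le), mgf_eq]

lemma gaussianPDFReal_mul_exp_mul_sq (a x : ℝ) :
    gaussianPDFReal 0 1 x * exp (a * x ^ 2) = (√(2 * π))⁻¹ * exp (-(1 / 2 - a) * x ^ 2) := by
  simp only [gaussianPDFReal, sub_zero, NNReal.coe_one, mul_one]
  rw [mul_assoc, ← exp_add]
  ring_nf

lemma integrable_exp_mul_sq_gaussianReal {a : ℝ} (ha : a < 1 / 2) :
    Integrable (fun x => exp (a * x ^ 2)) (gaussianReal 0 1) := by
  rw [gaussianReal_of_var_ne_zero _ one_ne_zero,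
    integrable_withDensity_iff (measurable_gaussianPDF 0 1) (by simp [gaussianPDF])]
  simp only [toReal_gaussianPDF, mul_comm (exp _), gaussianPDFReal_mul_exp_mul_sq]
  exact (integrable_exp_neg_mul_sq (sub_pos.2 ha)).const_mul _

lemma integral_exp_mul_sq_gaussianReal (a : ℝ) :
    ∫ x, exp (a * x ^ 2) ∂gaussianReal 0 1 = (√(1 - 2 * a))⁻¹ := by
  simp only [integral_gaussianReal_eq_integral_smul one_ne_zero, smul_eq_mul,
    gaussianPDFReal_mul_exp_mul_sq, integral_const_mul, integral_gaussian]
  rw [← sqrt_inv, ← sqrt_inv, ← sqrt_mul (by positivity)]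
  congr 1
  field_simp

lemma inv_sqrt_one_sub_two_mul_le_exp {a : ℝ} (ha : a < 1 / 2) :
    (√(1 - 2 * a))⁻¹ ≤ exp (a / (1 - 2 * a)) := by
  have h : 0 < 1 - 2 * a := by linarith
  rw [← sqrt_inv, sqrt_le_left (exp_pos _).le, ← exp_nat_mul]
  refine le_trans (le_of_eq ?_) (add_one_le_exp _)
  push_cast
  field_simp
  ring

lemma exp_mul_dotProduct_self (a : ℝ) (w : κ → ℝ) :
    exp (a * (w ⬝ᵥ w)) = ∏ k, exp (a * w k ^ 2) := by
  simp only [dotProduct, ← exp_sum, mul_sum, pow_two]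

lemma integral_exp_mul_dotProduct_self_gaussianPi_le {a : ℝ} (ha : a < 1 / 2) :
    ∫ w, exp (a * (w ⬝ᵥ w)) ∂gaussianPi κ ≤ exp (Fintype.card κ * (a / (1 - 2 * a))) := by
  simp only [exp_mul_dotProduct_self]
  rw [integral_fintype_prod_eq_pow (fun x => exp (a * x ^ 2)), integral_exp_mul_sq_gaussianReal,
    exp_nat_mul]
  exact pow_le_pow_left₀ (by positivity) (inv_sqrt_one_sub_two_mul_le_exp ha) _

lemma integrable_exp_mul_dotProduct_self_gaussianPi {a : ℝ} (ha : a < 1 / 2) :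
    Integrable (fun w => exp (a * (w ⬝ᵥ w))) (gaussianPi κ) := by
  simp only [exp_mul_dotProduct_self]
  exact Integrable.fintype_prod fun _ => integrable_exp_mul_sq_gaussianReal ha

/-- By AM-GM, `t * x ≤ t * c / 2 + t / (2 * c) * x ^ 2`, which reduces the claim to the moments of
`exp (a * x ^ 2)`; the choice `c = t + √(Fintype.card κ)` minimizes the resulting bound. -/
theorem lintegral_exp_mul_norm_gaussianPi_le [Nonempty κ] {t : ℝ} (ht : 0 < t) :
    ∫⁻ w, ENNReal.ofReal (exp (t * ‖WithLp.toLp 2 w‖)) ∂gaussianPi κ ≤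
      ENNReal.ofReal (exp (t * √(Fintype.card κ) + t ^ 2 / 2)) := by
  set N : ℝ := (Fintype.card κ : ℝ)
  have N_eq : √N * √N = N := mul_self_sqrt (Nat.cast_nonneg _)
  have hN : 0 < √N := sqrt_pos.2 (by simp [N, Fintype.card_pos])
  set c := t + √N
  have hc : 0 < c := by positivity
  set a := t / (2 * c) with a_def
  have one_sub_eq : 1 - 2 * a = √N / c := by simp only [a, c]; field_simp; ring
  have ha : a < 1 / 2 := by linarith [div_pos hN hc]
  have exponent_eq : t * c / 2 + N * (a / (1 - 2 * a)) = t * √N + t ^ 2 / 2 := by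
    rw [one_sub_eq, a_def, div_div_div_eq]
    nth_rw 1 [← N_eq]
    field_simp
    simp only [c]
    ring
  have exp_le (w : κ → ℝ) :
      exp (t * ‖WithLp.toLp 2 w‖) ≤ exp (t * c / 2) * exp (a * (w ⬝ᵥ w)) := by
    rw [← exp_add, exp_le_exp, ← sub_nonneg, dotProduct_self_eq_norm_sq]
    have : t * c / 2 + a * ‖WithLp.toLp 2 w‖ ^ 2 - t * ‖WithLp.toLp 2 w‖ =
        a * (‖WithLp.toLp 2 w‖ - c) ^ 2 := by simp only [a]; field_simp; ring
    rw [this]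
    positivity
  calc ∫⁻ w, ENNReal.ofReal (exp (t * ‖WithLp.toLp 2 w‖)) ∂gaussianPi κ
      ≤ ∫⁻ w, ENNReal.ofReal (exp (t * c / 2) * exp (a * (w ⬝ᵥ w))) ∂gaussianPi κ :=
        lintegral_mono fun w => ENNReal.ofReal_le_ofReal (exp_le w)
    _ = ENNReal.ofReal (exp (t * c / 2) * ∫ w, exp (a * (w ⬝ᵥ w)) ∂gaussianPi κ) := by
        rw [← integral_const_mul, ofReal_integral_eq_lintegral_ofReal
          ((integrable_exp_mul_dotProduct_self_gaussianPi ha).const_mul _)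
          (.of_forall fun w => by positivity)]
    _ ≤ ENNReal.ofReal (exp (t * √N + t ^ 2 / 2)) := by
        rw [← exponent_eq, exp_add]
        gcongr
        exact integral_exp_mul_dotProduct_self_gaussianPi_le ha

variable {m n : Type*} [Fintype m] [Fintype n] [DecidableEq n]

lemma continuous_l2_opNorm_of_curry :
    Continuous fun w : m × n → ℝ => ‖Matrix.of (Function.curry w)‖ :=
  continuous_norm.comp (continuous_matrix fun i j => continuous_apply (i, j))

lemma l2_opNorm_of_div (w : m × n → ℝ) (c : ℝ) :
    ‖Matrix.of fun i j => w (i, j) / c‖ = ‖Matrix.of (Function.curry w)‖ / |c| := by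
  have : Matrix.of (fun i j => w (i, j) / c) = c⁻¹ • Matrix.of (Function.curry w) := by
    ext i j
    simp [div_eq_inv_mul]
  rw [this, norm_smul, norm_inv, norm_eq_abs, inv_mul_eq_div]

variable [Nonempty m] [Nonempty n]

theorem lintegral_exp_mul_l2_opNorm_gaussianPi_le {t : ℝ} (ht : 0 < t) :
    ∫⁻ w, ENNReal.ofReal (exp (t * ‖Matrix.of (Function.curry w)‖)) ∂gaussianPi (m × n) ≤
      ENNReal.ofReal (exp (t * (√(Fintype.card m) + √(Fintype.card n)) + t ^ 2 / 2)) := by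
  have measurable_opNorm : Measurable fun w : m × n → ℝ => ‖Matrix.of (Function.curry w)‖ :=
    continuous_l2_opNorm_of_curry.measurable
  have measurable_opNorm_inl : Measurable fun w : (m × n) ⊕ Unit → ℝ =>
      ‖Matrix.of (Function.curry (w ∘ Sum.inl))‖ :=
    measurable_opNorm.comp (by fun_prop)
  refine (ENNReal.mul_le_mul_iff_left
    (c := ENNReal.ofReal (exp (t ^ 2 / 2))) (by simp [exp_pos]) (by simp)).1 ?_
  calc (∫⁻ w, ENNReal.ofReal (exp (t * ‖Matrix.of (Function.curry w)‖)) ∂gaussianPi (m × n)) *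
        ENNReal.ofReal (exp (t ^ 2 / 2))
      = ∫⁻ w, ENNReal.ofReal (exp (t * (‖Matrix.of (Function.curry (w ∘ Sum.inl))‖ +
          w (Sum.inr ())))) ∂gaussianPi ((m × n) ⊕ Unit) := by
        rw [← lintegral_exp_mul_eval_gaussianPi (),
          ← lintegral_exp_mul_add_gaussianPi measurable_opNorm (measurable_pi_apply ())]
        rfl
    _ ≤ ∫⁻ w, ENNReal.ofReal (exp (t * (‖WithLp.toLp 2 (w ∘ Sum.inl)‖ +
          ‖WithLp.toLp 2 (w ∘ Sum.inr)‖))) ∂gaussianPi (m ⊕ n) :=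
        lintegral_exp_mul_le_of_measure_le_le (measurable_opNorm_inl.add (by fun_prop))
          (by fun_prop) measure_norm_add_norm_le_le_measure_l2_opNorm_add_le ht
    _ = (∫⁻ w, ENNReal.ofReal (exp (t * ‖WithLp.toLp 2 w‖)) ∂gaussianPi m) *
          ∫⁻ w, ENNReal.ofReal (exp (t * ‖WithLp.toLp 2 w‖)) ∂gaussianPi n :=
        lintegral_exp_mul_add_gaussianPi (f := fun w => ‖WithLp.toLp 2 w‖)
          (g := fun w => ‖WithLp.toLp 2 w‖) (by fun_prop) (by fun_prop) t
    _ ≤ ENNReal.ofReal (exp (t * √(Fintype.card m) + t ^ 2 / 2)) *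
          ENNReal.ofReal (exp (t * √(Fintype.card n) + t ^ 2 / 2)) :=
        mul_le_mul' (lintegral_exp_mul_norm_gaussianPi_le ht)
          (lintegral_exp_mul_norm_gaussianPi_le ht)
    _ = _ := by
        simp only [← ENNReal.ofReal_mul (exp_pos _).le, ← exp_add]
        ring_nf

theorem measure_lt_l2_opNorm_gaussianPi_le {t : ℝ} (ht : 0 ≤ t) :
    gaussianPi (m × n)
        {w | √(Fintype.card m) + √(Fintype.card n) + t < ‖Matrix.of (Function.curry w)‖} ≤
      ENNReal.ofReal (exp (-(t ^ 2 / 2))) := by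
  obtain rfl | ht := ht.eq_or_lt
  · simpa using prob_le_one
  set r := √(Fintype.card m) + √(Fintype.card n)
  calc gaussianPi (m × n) {w | r + t < ‖Matrix.of (Function.curry w)‖}
      ≤ gaussianPi (m × n) {w | ENNReal.ofReal (exp (t * (r + t))) ≤
          ENNReal.ofReal (exp (t * ‖Matrix.of (Function.curry w)‖))} :=
        measure_mono fun w hw => ENNReal.ofReal_le_ofReal
          (exp_le_exp.2 (mul_le_mul_of_nonneg_left (le_of_lt hw) ht.le))
    _ ≤ (∫⁻ w, ENNReal.ofReal (exp (t * ‖Matrix.of (Function.curry w)‖)) ∂gaussianPi (m × n)) /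
          ENNReal.ofReal (exp (t * (r + t))) :=
        meas_ge_le_lintegral_div
          (continuous_l2_opNorm_of_curry.measurable.const_mul t).exp.ennreal_ofReal.aemeasurable
          (by simp [exp_pos]) (by simp)
    _ ≤ ENNReal.ofReal (exp (t * r + t ^ 2 / 2)) / ENNReal.ofReal (exp (t * (r + t))) :=
        ENNReal.div_le_div_right (lintegral_exp_mul_l2_opNorm_gaussianPi_le ht) _
    _ = ENNReal.ofReal (exp (-(t ^ 2 / 2))) := by
        rw [← ENNReal.ofReal_div_of_pos (exp_pos _), ← exp_sub]
        ring_nf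

end ExponentialMoments

section ScaledGaussian

lemma opNorm_le_l2_opNorm {l d : ℕ} (S : Matrix (Fin l) (Fin d) ℝ) : opNorm S ≤ ‖S‖ := by
  refine Real.sSup_le ?_ (norm_nonneg S)
  rintro _ ⟨v, hv, rfl⟩
  have enorm_eq {n : ℕ} (x : Fin n → ℝ) : enorm x = ‖WithLp.toLp 2 x‖ := by
    simp [enorm, EuclideanSpace.norm_eq]
  have := S.l2_opNorm_mulVec (WithLp.toLp 2 v)
  rwa [← enorm_eq, ← enorm_eq, hv, mul_one] at this

lemma map_gaussianPi_eq_scaledGaussian (l d : ℕ) :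
    (gaussianPi (Fin l × Fin d)).map (fun w r s => w (r, s) / √l) = scaledGaussian l d := by
  have map_div : (gaussianPi (Fin l × Fin d)).map (fun w p => w p / √l) =
      Measure.pi fun _ => gaussianReal 0 (l : ℝ≥0)⁻¹ := by
    rw [Measure.pi_map_pi (f := fun _ x => x / √(l : ℝ)) (fun _ => by fun_prop)]
    congr 1 with p : 1
    rw [gaussianReal_map_div_const]
    congr 1
    · simp
    · ext
      simp
  have map_curry : (Measure.pi fun _ : Fin l × Fin d => gaussianReal 0 (l : ℝ≥0)⁻¹).map
      (MeasurableEquiv.curry (Fin l) (Fin d) ℝ) = scaledGaussian l d := by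
    have := Measure.infinitePi_map_curry
      fun (_ : Fin l) (_ : Fin d) => gaussianReal 0 (l : ℝ≥0)⁻¹
    simpa only [Measure.infinitePi_eq_pi, scaledGaussian] using this
  rw [← map_curry, ← map_div, Measure.map_map (by fun_prop) (by fun_prop)]
  rfl

theorem one_sub_exp_le_scaledGaussian_opNorm_le {l d : ℕ} (hl : 0 < l) (hd : 0 < d) {t : ℝ}
    (ht : 0 ≤ t) :
    ENNReal.ofReal (1 - exp (-(t ^ 2 / 2))) ≤
      scaledGaussian l d {S | opNorm (Matrix.of S) ≤ (√l + √d + t) / √l} := by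
  have : Nonempty (Fin l) := ⟨⟨0, hl⟩⟩
  have : Nonempty (Fin d) := ⟨⟨0, hd⟩⟩
  have sqrt_l_pos : 0 < √(l : ℝ) := sqrt_pos.2 (Nat.cast_pos.2 hl)
  have continuous_l2_opNorm : Continuous fun S : Fin l → Fin d → ℝ => ‖Matrix.of S‖ :=
    continuous_norm (E := Matrix (Fin l) (Fin d) ℝ)
  have measurableSet_le : MeasurableSet
      {S : Fin l → Fin d → ℝ | ‖Matrix.of S‖ ≤ (√l + √d + t) / √l} :=
    (isClosed_le continuous_l2_opNorm continuous_const).measurableSet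
  have preimage_eq : (fun w : Fin l × Fin d → ℝ => fun r s => w (r, s) / √l) ⁻¹'
      {S | ‖Matrix.of S‖ ≤ (√l + √d + t) / √l} =
        {w | √l + √d + t < ‖Matrix.of (Function.curry w)‖}ᶜ := by
    ext w
    simp [l2_opNorm_of_div, abs_of_pos sqrt_l_pos, div_le_div_iff_of_pos_right sqrt_l_pos]
  calc ENNReal.ofReal (1 - exp (-(t ^ 2 / 2)))
      ≤ 1 - gaussianPi (Fin l × Fin d) {w | √l + √d + t < ‖Matrix.of (Function.curry w)‖} := by
        rw [ENNReal.ofReal_sub _ (exp_pos _).le, ENNReal.ofReal_one]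
        have tail := measure_lt_l2_opNorm_gaussianPi_le (m := Fin l) (n := Fin d) ht
        simp only [Fintype.card_fin] at tail
        exact tsub_le_tsub_left tail 1
    _ = gaussianPi (Fin l × Fin d) {w | √l + √d + t < ‖Matrix.of (Function.curry w)‖}ᶜ :=
        (prob_compl_eq_one_sub
          (isOpen_lt continuous_const continuous_l2_opNorm_of_curry).measurableSet).symm
    _ = scaledGaussian l d {S | ‖Matrix.of S‖ ≤ (√l + √d + t) / √l} := by
        rw [← map_gaussianPi_eq_scaledGaussian, Measure.map_apply (by fun_prop) measurableSet_le,
          preimage_eq]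
    _ ≤ scaledGaussian l d {S | opNorm (Matrix.of S) ≤ (√l + √d + t) / √l} :=
        measure_mono fun S hS => (opNorm_le_l2_opNorm _).trans hS

end ScaledGaussian

end RandomMatrixTail

theorem stmt5 (l d : ℕ) (hl : 0 < l) (hd : 0 < d) (δ : ℝ) (hδ : δ ∈ Set.Ioo (0:ℝ) 1) :
    scaledGaussian l d
      {S : Fin l → Fin d → ℝ |
        opNorm (Matrix.of S) ≤ 1 + Real.sqrt ((d:ℝ)/l) + Real.sqrt (2 * Real.log (1/δ) / l)}
      ≥ ENNReal.ofReal (1 - δ) := by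
  have two_mul_log_nonneg : 0 ≤ 2 * Real.log (1 / δ) :=
    mul_nonneg zero_le_two (Real.log_nonneg (one_le_one_div hδ.1 hδ.2.le))
  set t := √(2 * Real.log (1 / δ)) with t_def
  have exp_eq : Real.exp (-(t ^ 2 / 2)) = δ := by
    rw [t_def, Real.sq_sqrt two_mul_log_nonneg, mul_div_cancel_left₀ _ two_ne_zero, one_div,
      Real.log_inv, neg_neg, Real.exp_log hδ.1]
  have radius_eq : 1 + √((d : ℝ) / l) + √(2 * Real.log (1 / δ) / l) = (√l + √d + t) / √l := by
    have : √(l : ℝ) ≠ 0 := (Real.sqrt_pos.2 (Nat.cast_pos.2 hl)).ne'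
    rw [Real.sqrt_div (Nat.cast_nonneg d), Real.sqrt_div two_mul_log_nonneg, add_div, add_div,
      div_self this]
  rw [radius_eq, ← exp_eq]
  exact one_sub_exp_le_scaledGaussian_opNorm_le hl hd (Real.sqrt_nonneg _)

end RARC
end

section
/- Let μ be the law of a scaled Gaussian matrix S ∈ ℝ^{l×d} and let Q ∈ ℝ^{d×d} be an orthogonal matrix (QᵀQ = I). Then the pushforward of μ under the map S ↦ S·Q equals μ; that is, S·Q is again a scaled Gaussian matrix in distribution. -/
open scoped BigOperators NNReal
open MeasureTheory ProbabilityTheory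

namespace RARC

/-!
The rows of `S * Q` are the images of the independent rows of `S` under `x ↦ x ᵥ* Q`, so it suffices
to treat one row. The characteristic function of a vector of independent Gaussians of variance `v`
sees a linear form `L` only through its value at the mean and the Euclidean norm of its coefficient
vector. Precomposing `L` with `x ↦ x ᵥ* Q` replaces that coefficient vector `c` by `Q *ᵥ c`, which
has the same norm when the columns of `Q` are orthonormal.
-/

section GaussianMatrix

open Matrix

section OrthonormalColumns

variable {κ κ' R : Type*} [Fintype κ] [Fintype κ'] [DecidableEq κ'] [CommSemiring R]
  {Q : Matrix κ κ' R}

lemma mulVec_dotProduct_mulVec_of_transpose_mul_self (hQ : Qᵀ * Q = 1) (x y : κ' → R) :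
    Q *ᵥ x ⬝ᵥ Q *ᵥ y = x ⬝ᵥ y := by
  rw [dotProduct_mulVec, ← mulVec_transpose, mulVec_mulVec, hQ, one_mulVec]

lemma sum_map_row_sq_of_transpose_mul_self (hQ : Qᵀ * Q = 1) (f : (κ' → R) →ₗ[R] R) :
    ∑ i, f (Q.row i) ^ 2 = ∑ j, f (Pi.single j 1) ^ 2 := by
  have map_row (i : κ) : f (Q.row i) = (Q *ᵥ fun j ↦ f (Pi.single j 1)) i := by
    rw [pi_eq_sum_univ' (Q.row i)]
    simp [mulVec, dotProduct]
  simpa only [dotProduct, map_row, sq] using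
    mulVec_dotProduct_mulVec_of_transpose_mul_self hQ
      (fun j ↦ f (Pi.single j 1)) (fun j ↦ f (Pi.single j 1))

end OrthonormalColumns

variable {ι κ κ' : Type*} [Fintype κ] [Fintype κ']

lemma charFunDual_pi_gaussianReal [DecidableEq κ] (m : κ → ℝ) (v : κ → ℝ≥0)
    (L : StrongDual ℝ (κ → ℝ)) :
    charFunDual (Measure.pi fun i ↦ gaussianReal (m i) (v i)) L =
      Complex.exp (L m * Complex.I - (∑ i, v i * L (Pi.single i 1) ^ 2 : ℝ) / 2) := by
  have sum_single : ∑ i, L (Pi.single i (m i)) = L m := by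
    rw [← map_sum, Finset.univ_sum_single]
  simp_rw [charFunDual_pi, charFunDual_eq_charFun_map_one, gaussianReal_map_continuousLinearMap,
    charFun_gaussianReal, ← Complex.exp_sum, ← sum_single]
  simp [Finset.sum_mul, Finset.sum_div, sq_nonneg, mul_comm (_ ^ 2 : ℂ)]

lemma map_vecMul_pi_gaussianReal [DecidableEq κ'] (m : κ → ℝ) (v : ℝ≥0)
    {Q : Matrix κ κ' ℝ} (hQ : Qᵀ * Q = 1) :
    (Measure.pi fun i ↦ gaussianReal (m i) v).map (fun x ↦ x ᵥ* Q) =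
      Measure.pi fun j ↦ gaussianReal ((m ᵥ* Q) j) v := by
  classical
  let T : (κ → ℝ) →L[ℝ] (κ' → ℝ) := Q.vecMulLinear.toContinuousLinearMap
  change Measure.map T _ = _
  refine Measure.ext_of_charFunDual (funext fun L ↦ ?_)
  have map_mean : (L.comp T) m = L (m ᵥ* Q) := rfl
  have sum_sq : ∑ i, (L.comp T) (Pi.single i 1) ^ 2 = ∑ j, L (Pi.single j 1) ^ 2 := by
    simpa [T] using sum_map_row_sq_of_transpose_mul_self hQ L.toLinearMap
  rw [charFunDual_map, charFunDual_pi_gaussianReal, charFunDual_pi_gaussianReal,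
    ← Finset.mul_sum, ← Finset.mul_sum, sum_sq, map_mean]

theorem stmt8_general [Fintype ι] [DecidableEq κ'] (M : Matrix ι κ ℝ) (v : ι → ℝ≥0)
    {Q : Matrix κ κ' ℝ} (hQ : Qᵀ * Q = 1) :
    (Measure.pi fun i ↦ Measure.pi fun k ↦ gaussianReal (M i k) (v i)).map
        (fun S ↦ of.symm (of S * Q)) =
      Measure.pi fun i ↦ Measure.pi fun k ↦ gaussianReal ((M * Q) i k) (v i) := by
  have row_map (i : ι) : MeasurePreserving (fun x ↦ x ᵥ* Q)
      (Measure.pi fun k ↦ gaussianReal (M i k) (v i))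
      (Measure.pi fun k ↦ gaussianReal ((M * Q) i k) (v i)) :=
    ⟨(continuous_id.matrix_vecMul continuous_const).measurable,
      map_vecMul_pi_gaussianReal (M i) (v i) hQ⟩
  exact (measurePreserving_pi _ _ row_map).map_eq

end GaussianMatrix

theorem stmt8 (l d : ℕ) (hl : 0 < l) (Q : Matrix (Fin d) (Fin d) ℝ)
    (hQ : Q.transpose * Q = 1) :
    (scaledGaussian l d).map
        (fun S => Matrix.of.symm (Matrix.of S * Q)) = scaledGaussian l d := by
  simpa [scaledGaussian] using
    stmt8_general (0 : Matrix (Fin l) (Fin d) ℝ) (fun _ ↦ (l : ℝ≥0)⁻¹) hQ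

end RARC
end

section
/- Let A ∈ ℝ^{d×d} be a symmetric matrix of rank r, and let S ∈ ℝ^{l×d} be a scaled Gaussian matrix with l ≤ d. Let m = min(l, r). Then, with probability 1, rank(S·A·Sᵀ) = m. -/
open scoped BigOperators NNReal
open MeasureTheory ProbabilityTheory

namespace RARC

/-!
A nonvanishing minor of `S * A * Sᵀ` at a single matrix `B` is a nonzero polynomial in the entries
of `S`, and the zero set of a nonzero polynomial is null for a product of atomless measures. Hence
almost surely `rank (S * A * Sᵀ) ≥ rank (B * A * Bᵀ)` for each fixed `B`. As `A` is symmetric, some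
invertible `P` makes `P * A * Pᵀ` diagonal; using rows of `P` at nonzero diagonal entries as rows
of `B` yields rank at least `min l r`, which is also an upper bound for every `S`.
-/

section Rank

variable {K : Type*} [Field K] {m n : Type*} [Fintype n]

theorem exists_linearIndependent_row_submatrix [Finite m] {A : Matrix m n K} {k : ℕ}
    (hk : k ≤ A.rank) : ∃ r : Fin k → m, LinearIndependent K (A.submatrix r id).row := by
  obtain ⟨f, hf, -, hli⟩ := Submodule.exists_fun_fin_finrank_span_eq K (Set.range A.row)
  rw [A.rank_eq_finrank_span_row] at hk
  choose r hr using hf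
  refine ⟨r ∘ Fin.castLE hk, ?_⟩
  have hrow : (A.submatrix (r ∘ Fin.castLE hk) id).row = f ∘ Fin.castLE hk :=
    funext fun i => hr (Fin.castLE hk i)
  exact hrow ▸ hli.comp _ (Fin.castLE_injective hk)

theorem le_rank_iff_exists_det_submatrix_ne_zero [Finite m] {A : Matrix m n K} {k : ℕ} :
    k ≤ A.rank ↔ ∃ (r : Fin k → m) (c : Fin k → n), (A.submatrix r c).det ≠ 0 := by
  constructor
  · intro hk
    obtain ⟨r, hr⟩ := exists_linearIndependent_row_submatrix hk
    have hrank : (A.submatrix r id).transpose.rank = k := by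
      rw [Matrix.rank_transpose, hr.rank_matrix, Fintype.card_fin]
    obtain ⟨c, hc⟩ := exists_linearIndependent_row_submatrix hrank.ge
    refine ⟨r, c, ?_⟩
    rw [← Matrix.det_transpose]
    exact ((Matrix.isUnit_iff_isUnit_det _).1
      (Matrix.linearIndependent_rows_iff_isUnit.1 hc)).ne_zero
  · rintro ⟨r, c, hdet⟩
    simpa [Matrix.rank_of_det_ne_zero hdet] using Matrix.rank_submatrix_le A r c

theorem exists_isUnit_det_mul_mul_transpose_eq_diagonal [DecidableEq n] [Invertible (2 : K)]
    {A : Matrix n n K} (hA : A.IsSymm) :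
    ∃ (P : Matrix n n K) (w : n → K),
      IsUnit P.det ∧ P * A * P.transpose = Matrix.diagonal w := by
  obtain ⟨v, hv⟩ := LinearMap.BilinForm.exists_orthogonal_basis
    (B := Matrix.toBilin' A) (LinearMap.BilinForm.isSymm_iff.1
      (Matrix.isSymm_toBilin'_iff_isSymm.2 hA))
  let e : Fin (Module.finrank K (n → K)) ≃ n := Fintype.equivOfCardEq (by simp)
  let Q := (Pi.basisFun K n).toMatrix (v.reindex e)
  have hQ : IsUnit Q.det :=
    have : Invertible Q := (Pi.basisFun K n).invertibleToMatrix (v.reindex e)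
    Matrix.isUnit_det_of_invertible Q
  refine ⟨Q.transpose, fun i => Matrix.toBilin' A (v.reindex e i) (v.reindex e i),
    by rwa [Matrix.det_transpose], ?_⟩
  have hcongr : Q.transpose * A * Q
      = LinearMap.BilinForm.toMatrix (v.reindex e) (Matrix.toBilin' A) := by
    rw [← LinearMap.BilinForm.toMatrix_mul_basis_toMatrix (Pi.basisFun K n),
      LinearMap.BilinForm.toMatrix_basisFun, LinearMap.BilinForm.toMatrix'_toBilin']
  rw [Matrix.transpose_transpose, hcongr]
  ext i j
  rw [LinearMap.BilinForm.toMatrix_apply]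
  rcases eq_or_ne i j with rfl | hij
  · simp
  · rw [Matrix.diagonal_apply_ne _ hij, v.reindex_apply, v.reindex_apply]
    exact hv (e.symm.injective.ne hij)

theorem exists_min_card_le_rank_mul_mul_transpose (m : Type*) [Fintype m] [Invertible (2 : K)]
    {A : Matrix n n K} (hA : A.IsSymm) :
    ∃ B : Matrix m n K, min (Fintype.card m) A.rank ≤ (B * A * B.transpose).rank := by
  classical
  obtain ⟨P, w, hP, hPA⟩ := exists_isUnit_det_mul_mul_transpose_eq_diagonal hA
  have hrank : A.rank = Fintype.card {i // w i ≠ 0} := by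
    rw [← Matrix.rank_diagonal, ← hPA, Matrix.rank_mul_eq_left_of_isUnit_det _ _
      (by rwa [Matrix.det_transpose]), Matrix.rank_mul_eq_right_of_isUnit_det _ _ hP]
  obtain ⟨f⟩ : Nonempty (Fin (min (Fintype.card m) A.rank) ↪ m) :=
    Function.Embedding.nonempty_of_card_le (by simp)
  obtain ⟨g⟩ : Nonempty (Fin (min (Fintype.card m) A.rank) ↪ {i // w i ≠ 0}) :=
    Function.Embedding.nonempty_of_card_le (by simp [hrank])
  let B : Matrix m n K := Matrix.of (Function.extend f (fun a => P (g a)) 0)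
  refine ⟨B, le_rank_iff_exists_det_submatrix_ne_zero.2 ⟨f, f, ?_⟩⟩
  have hB : (B * A * B.transpose).submatrix f f = Matrix.diagonal fun a => w (g a) := by
    calc (B * A * B.transpose).submatrix f f
        = (P * A * P.transpose).submatrix (fun a => g a) (fun a => g a) := by
          ext a b
          simp [B, Matrix.mul_apply, f.injective.extend_apply]
      _ = Matrix.diagonal fun a => w (g a) := by
          rw [hPA]
          exact Matrix.submatrix_diagonal _ _ (Subtype.val_injective.comp g.injective)
  rw [hB, Matrix.det_diagonal]
  exact Finset.prod_ne_zero_iff.2 fun a _ => (g a).2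

end Rank

theorem measurePreserving_uncurry {ι κ X : Type*} [Fintype ι] [Fintype κ] [MeasurableSpace X]
    (μ : ι → κ → Measure X) [∀ i j, SigmaFinite (μ i j)] :
    MeasurePreserving Function.uncurry (Measure.pi fun i => Measure.pi (μ i))
      (Measure.pi fun p : ι × κ => μ p.1 p.2) where
  measurable := measurable_uncurry
  map_eq := by
    refine (Measure.pi_eq fun s hs => ?_).symm
    have hpre : Function.uncurry ⁻¹' Set.univ.pi s
        = Set.univ.pi fun i : ι => Set.univ.pi fun j : κ => s (i, j) := by
      ext; simp
    rw [Measure.map_apply measurable_uncurry (.univ_pi hs), hpre]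
    simp_rw [Measure.pi_pi]
    exact (Fintype.prod_prod_type fun p : ι × κ => μ p.1 p.2 (s p)).symm

section Measure

variable {K : Type*} [Field K] [MeasurableSpace K] [MeasurableAdd₂ K] [MeasurableMul₂ K]

theorem measurable_mvPolynomial_eval {σ : Type*} (p : MvPolynomial σ K) :
    Measurable fun x : σ → K => MvPolynomial.eval x p := by
  induction p using MvPolynomial.induction_on with
  | C a => simp
  | add p q hp hq => simpa using! hp.add hq
  | mul_X p i hp => simpa using! hp.mul (measurable_pi_apply i)

variable [MeasurableSingletonClass K]

theorem ae_mvPolynomial_option_eval_ne_zero {σ : Type*} [Fintype σ] (μ : Option σ → Measure K)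
    [∀ i, SigmaFinite (μ i)] [NullSingletonClass (μ none)]
    (hσ : ∀ q : MvPolynomial σ K, q ≠ 0 →
      ∀ᵐ y ∂Measure.pi fun i => μ (some i), MvPolynomial.eval y q ≠ 0)
    {p : MvPolynomial (Option σ) K} (hp : p ≠ 0) :
    ∀ᵐ x ∂Measure.pi μ, MvPolynomial.eval x p ≠ 0 := by
  have hmeas : MeasurableSet {x : Option σ → K | MvPolynomial.eval x p ≠ 0} :=
    measurable_mvPolynomial_eval p (measurableSet_singleton 0).compl
  have he := (MeasurableEquiv.piOptionEquivProd fun _ : Option σ => K).symm.measurable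
  rw [← Measure.pi_map_piOptionEquivProd μ, ae_map_iff he.aemeasurable hmeas]
  refine (Measure.ae_prod_iff_ae_ae (he hmeas)).2 ?_
  -- Fubini: where the leading coefficient in the variable `none` does not vanish, the fibre of the
  -- zero set is the root set of a nonzero univariate polynomial, hence finite.
  let q := MvPolynomial.optionEquivLeft K σ p
  have hq : q ≠ 0 := by simpa [q] using hp
  filter_upwards [hσ _ (Polynomial.leadingCoeff_ne_zero.2 hq)] with y hy
  have hqy : q.map (MvPolynomial.eval y) ≠ 0 := fun h => hy <| by
    rw [Polynomial.leadingCoeff, ← Polynomial.coeff_map, h, Polynomial.coeff_zero]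
  filter_upwards [(Polynomial.finite_setOfPred_isRoot hqy).countable.ae_notMem (μ none)] with t ht
  rw [Polynomial.IsRoot, ← MvPolynomial.optionEquivLeft_elim_eval] at ht
  convert! ht with x
  cases x <;> rfl

theorem ae_mvPolynomial_eval_ne_zero {σ : Type*} [Fintype σ] (μ : σ → Measure K)
    [∀ i, SigmaFinite (μ i)] [∀ i, NullSingletonClass (μ i)]
    {p : MvPolynomial σ K} (hp : p ≠ 0) :
    ∀ᵐ x ∂Measure.pi μ, MvPolynomial.eval x p ≠ 0 := by
  refine Fintype.induction_empty_option
    (P := fun σ _ => ∀ (μ : σ → Measure K) [∀ i, SigmaFinite (μ i)]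
      [∀ i, NullSingletonClass (μ i)] {p : MvPolynomial σ K}, p ≠ 0 →
        ∀ᵐ x ∂Measure.pi μ, MvPolynomial.eval x p ≠ 0) ?_ ?_ ?_ σ μ hp
  · intro α β _ e ih μ _ _ p hp
    let := Fintype.ofEquiv _ e.symm
    have hq : MvPolynomial.rename e.symm p ≠ 0 :=
      (map_ne_zero_iff _ (MvPolynomial.rename_injective _ e.symm.injective)).2 hp
    have hmp := (measurePreserving_piCongrLeft μ e).symm
    filter_upwards [hmp.quasiMeasurePreserving.ae (ih (fun i => μ (e i)) hq)] with x hx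
    rw [MvPolynomial.eval_rename] at hx
    convert! hx
    ext i
    simp [MeasurableEquiv.piCongrLeft]
  · intro μ _ _ p hp
    refine .of_forall fun x => ?_
    rw [MvPolynomial.eq_C_of_isEmpty p] at hp ⊢
    simpa using hp
  · intro α _ ih μ _ _ p hp
    exact ae_mvPolynomial_option_eval_ne_zero μ (fun _ => ih fun i => μ (some i)) hp

theorem ae_rank_map_eval_le {σ : Type*} [Fintype σ] (μ : σ → Measure K)
    [∀ i, SigmaFinite (μ i)] [∀ i, NullSingletonClass (μ i)] {m n : Type*} [Finite m] [Fintype n]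
    (M : Matrix m n (MvPolynomial σ K)) (x₀ : σ → K) :
    ∀ᵐ x ∂Measure.pi μ,
      (M.map (MvPolynomial.eval x₀)).rank ≤ (M.map (MvPolynomial.eval x)).rank := by
  obtain ⟨r, c, hx₀⟩ := le_rank_iff_exists_det_submatrix_ne_zero.1
    (le_refl (M.map (MvPolynomial.eval x₀)).rank)
  have hminor (x : σ → K) : ((M.map (MvPolynomial.eval x)).submatrix r c).det
      = MvPolynomial.eval x (M.submatrix r c).det :=
    ((MvPolynomial.eval x).map_det (M.submatrix r c)).symm
  have hp : (M.submatrix r c).det ≠ 0 := fun h => hx₀ (by rw [hminor, h, map_zero])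
  filter_upwards [ae_mvPolynomial_eval_ne_zero μ hp] with x hx
  exact le_rank_iff_exists_det_submatrix_ne_zero.2 ⟨r, c, by rwa [hminor]⟩

theorem stmt9_general [Invertible (2 : K)] {m n : Type*} [Fintype m] [Fintype n]
    (μ : m → n → Measure K) [∀ i j, SigmaFinite (μ i j)] [∀ i j, NullSingletonClass (μ i j)]
    {A : Matrix n n K} (hA : A.IsSymm) :
    ∀ᵐ S ∂(Measure.pi fun i => Measure.pi (μ i)),
      (Matrix.of S * A * (Matrix.of S).transpose).rank = min (Fintype.card m) A.rank := by
  obtain ⟨B, hB⟩ := exists_min_card_le_rank_mul_mul_transpose m hA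
  let X : Matrix m n (MvPolynomial (m × n) K) := Matrix.mvPolynomialX m n K
  let M : Matrix m m (MvPolynomial (m × n) K) :=
    X * A.map (MvPolynomial.C (σ := m × n)) * X.transpose
  have heval (S : m → n → K) : M.map (MvPolynomial.eval (Function.uncurry S))
      = Matrix.of S * A * (Matrix.of S).transpose := by
    ext i j
    simp [M, X, Matrix.mul_apply]
  have hgeneric := ae_rank_map_eval_le (fun p : m × n => μ p.1 p.2) M
    (Function.uncurry (Matrix.of.symm B))
  filter_upwards [(measurePreserving_uncurry μ).quasiMeasurePreserving.ae hgeneric] with S hS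
  rw [heval, heval, Equiv.apply_symm_apply] at hS
  refine le_antisymm (le_min (Matrix.rank_le_card_height _) ?_) (hB.trans hS)
  exact (Matrix.rank_mul_le_left _ _).trans (Matrix.rank_mul_le_right _ _)

end Measure

theorem stmt9 (l d r : ℕ) (hl : 0 < l) (hld : l ≤ d)
    (A : Matrix (Fin d) (Fin d) ℝ) (hA : A.IsSymm) (hr : A.rank = r) :
    ∀ᵐ S ∂(scaledGaussian l d),
      (Matrix.of S * A * (Matrix.of S).transpose).rank = min l r := by
  have := nullSingletonClass_gaussianReal (μ := 0) (v := (l : ℝ≥0)⁻¹) (by positivity)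
  simpa [hr] using! stmt9_general (fun (_ : Fin l) (_ : Fin d) => gaussianReal 0 (l : ℝ≥0)⁻¹) hA

end RARC
end

section
/- There exists an absolute constant C > 0 such that the following holds: for all positive integers l and r, every ε_S ∈ (0,1), and all independent random vectors w₁, …, w_r in ℝ^l, each having independent Gaussian N(0, 1/l) entries, one has P( |‖w_r‖² − 1| ≤ ε_S and ⟨w_i, w_r⟩² ≤ 16·(1+ε_S)/l for all i ≠ r ) ≥ 0.9999^{r−1}·( 1 − 2·exp(−l·ε_S²/C) ). -/
open scoped BigOperators NNReal
open MeasureTheory ProbabilityTheory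

namespace RARC

/-
Fix the last vector `v`. The inner products `⟨w i, v⟩` of the other vectors with `v` are
independent `N(0, ‖v‖² / l)` variables, each of which stays within four standard deviations with
probability at least `0.9999` by the Mills bound on the Gaussian tail. If `‖v‖² ≤ 1 + ε`, this
is the required bound on all of them, so by Fubini the joint probability is at least
`0.9999 ^ n` times that of `|‖v‖² - 1| ≤ ε`.

The squared norm concentrates by Chernoff's method: for `X ~ N(0, s)` the moment generating
function `(1 - 2 s t) ^ (-1/2)` of `X²` is at most `exp (s t + 4 (s t)²)` when `s t ≤ 1/4`, and
optimising over `t` gives two tails of mass at most `exp (-l ε² / 16)`.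
-/

lemma hasDerivAt_gaussianPDFReal (m : ℝ) (v : ℝ≥0) (x : ℝ) :
    HasDerivAt (gaussianPDFReal m v) (-((x - m) / v * gaussianPDFReal m v x)) x := by
  have hexp : HasDerivAt (fun x : ℝ ↦ -(x - m) ^ 2 / (2 * v)) (-(x - m) / v) x := by
    refine ((((hasDerivAt_id x).sub_const m).pow 2).neg.div_const (2 * (v : ℝ))).congr_deriv ?_
    simp only [id_eq]
    ring
  refine (hexp.exp.const_mul (√(2 * Real.pi * v))⁻¹).congr_deriv ?_
  rw [gaussianPDFReal]
  ring

lemma tendsto_gaussianPDFReal_atTop (m : ℝ) (v : ℝ≥0) :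
    Filter.Tendsto (gaussianPDFReal m v) Filter.atTop (nhds 0) := by
  rcases eq_or_ne v 0 with rfl | hv
  · rw [gaussianPDFReal_zero_var]
    exact tendsto_const_nhds
  have hv : (0 : ℝ) < 2 * v := by positivity
  have hsq : Filter.Tendsto (fun x : ℝ ↦ (x - m) ^ 2 / (2 * v)) Filter.atTop Filter.atTop :=
    ((Filter.tendsto_pow_atTop two_ne_zero).comp
      (Filter.tendsto_atTop_add_const_right _ (-m) Filter.tendsto_id)).atTop_div_const hv
  simpa [gaussianPDFReal_def, neg_div, Function.comp_def] using
    (Real.tendsto_exp_neg_atTop_nhds_zero.comp hsq).const_mul (√(2 * Real.pi * v))⁻¹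

-- The Mills argument: on `(a, ∞)` the density `φ` is at most `(x - m) / (a - m) * φ x`, and
-- `(x - m) / v * φ x` is the derivative of `-φ`.
lemma measureReal_gaussianReal_Ioi_le {m a : ℝ} {v : ℝ≥0} (hv : v ≠ 0) (ha : m < a) :
    (gaussianReal m v).real (Set.Ioi a) ≤ v / (a - m) * gaussianPDFReal m v a := by
  have hv0 : (0 : ℝ) < v := by positivity
  have ham : 0 < a - m := sub_pos.2 ha
  set g' : ℝ → ℝ := fun x ↦ (x - m) / v * gaussianPDFReal m v x
  have hderiv : ∀ x ∈ Set.Ici a, HasDerivAt (fun x ↦ -gaussianPDFReal m v x) (g' x) x :=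
    fun x _ ↦ (hasDerivAt_gaussianPDFReal m v x).neg.congr_deriv (neg_neg _)
  have hnonneg : ∀ x ∈ Set.Ioi a, 0 ≤ g' x := fun x hx ↦
    mul_nonneg (div_nonneg (sub_nonneg.2 (ha.trans hx).le) v.2) (gaussianPDFReal_nonneg m v x)
  have hlim : Filter.Tendsto (fun x ↦ -gaussianPDFReal m v x) Filter.atTop (nhds 0) := by
    simpa using (tendsto_gaussianPDFReal_atTop m v).neg
  have hint : IntegrableOn g' (Set.Ioi a) := integrableOn_Ioi_deriv_of_nonneg' hderiv hnonneg hlim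
  calc (gaussianReal m v).real (Set.Ioi a)
      = ∫ x in Set.Ioi a, gaussianPDFReal m v x := by
        rw [measureReal_def, gaussianReal_apply_eq_integral m hv, ENNReal.toReal_ofReal]
        exact integral_nonneg (gaussianPDFReal_nonneg m v)
    _ ≤ ∫ x in Set.Ioi a, v / (a - m) * g' x := by
        refine setIntegral_mono_on (integrable_gaussianPDFReal m v).integrableOn
          (hint.const_mul _) measurableSet_Ioi fun x hx ↦ ?_
        have hratio : 1 ≤ v / (a - m) * ((x - m) / v) := by
          have hx : a < x := hx
          rw [div_mul_div_cancel₀' hv0.ne', one_le_div ham]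
          linarith
        simpa only [g', mul_assoc, one_mul] using
          mul_le_mul_of_nonneg_right hratio (gaussianPDFReal_nonneg m v x)
    _ = v / (a - m) * gaussianPDFReal m v a := by
        rw [integral_const_mul, integral_Ioi_of_hasDerivAt_of_nonneg' hderiv hnonneg hlim,
          sub_neg_eq_add, zero_add]

lemma measureReal_gaussianReal_Iio_neg (v : ℝ≥0) (a : ℝ) :
    (gaussianReal 0 v).real (Set.Iio (-a)) = (gaussianReal 0 v).real (Set.Ioi a) := by
  have hneg := gaussianReal_map_neg (μ := 0) (v := v)
  rw [neg_zero] at hneg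
  conv_rhs => rw [← hneg]
  rw [map_measureReal_apply measurable_neg measurableSet_Ioi, Set.neg_preimage, Set.neg_Ioi]

lemma measureReal_gaussianReal_lt_sq_le {k : ℝ} (hk : 0 < k) (v : ℝ≥0) :
    (gaussianReal 0 v).real {x | k ^ 2 * v < x ^ 2} ≤
      2 / (k * √(2 * Real.pi)) * Real.exp (-k ^ 2 / 2) := by
  rcases eq_or_ne v 0 with rfl | hv
  · have hzero : (gaussianReal 0 0).real {x : ℝ | k ^ 2 * (0 : ℝ≥0) < x ^ 2} = 0 := by
      simp [measureReal_def, gaussianReal_zero_var]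
    rw [hzero]
    positivity
  have hv0 : (0 : ℝ) < v := by positivity
  have hσ : 0 < k * √v := by positivity
  have htail : (gaussianReal 0 v).real (Set.Ioi (k * √v)) ≤
      1 / (k * √(2 * Real.pi)) * Real.exp (-k ^ 2 / 2) := by
    refine (measureReal_gaussianReal_Ioi_le hv hσ).trans_eq ?_
    have hexponent : -(k * √v) ^ 2 / (2 * v) = -k ^ 2 / 2 := by
      rw [mul_pow, Real.sq_sqrt hv0.le]
      field_simp
    rw [gaussianPDFReal, sub_zero, hexponent, Real.sqrt_mul (by positivity)]
    field_simp
    rw [Real.sq_sqrt hv0.le]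
  have hset : {x : ℝ | k ^ 2 * v < x ^ 2} = Set.Ioi (k * √v) ∪ Set.Iio (-(k * √v)) := by
    ext x
    have hsq : k ^ 2 * v = (k * √v) ^ 2 := by rw [mul_pow, Real.sq_sqrt hv0.le]
    rw [Set.mem_ofPred_eq, hsq, sq_lt_sq, abs_of_pos hσ, lt_abs, lt_neg]
    rfl
  calc (gaussianReal 0 v).real {x | k ^ 2 * v < x ^ 2}
      ≤ (gaussianReal 0 v).real (Set.Ioi (k * √v))
        + (gaussianReal 0 v).real (Set.Iio (-(k * √v))) :=
        hset ▸ measureReal_union_le _ _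
    _ = 2 * (gaussianReal 0 v).real (Set.Ioi (k * √v)) := by
        rw [measureReal_gaussianReal_Iio_neg, two_mul]
    _ ≤ 2 * (1 / (k * √(2 * Real.pi)) * Real.exp (-k ^ 2 / 2)) := by gcongr
    _ = 2 / (k * √(2 * Real.pi)) * Real.exp (-k ^ 2 / 2) := by ring

lemma exp_neg_eight_le : Real.exp (-8) ≤ 0.0004 := by
  have hexp : Real.exp (-8) = (Real.exp 1 ^ 8)⁻¹ := by
    rw [← Real.exp_nat_mul, ← Real.exp_neg]
    norm_num
  rw [hexp, inv_le_comm₀ (by positivity) (by norm_num)]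
  calc (0.0004 : ℝ)⁻¹ ≤ 2.7 ^ 8 := by norm_num
    _ ≤ Real.exp 1 ^ 8 := by gcongr; linarith [Real.exp_one_gt_d9]

lemma le_measureReal_gaussianReal_sq_le (v : ℝ≥0) :
    0.9999 ≤ (gaussianReal 0 v).real {x | x ^ 2 ≤ 16 * v} := by
  have hsqrt : 2.5 ≤ √(2 * Real.pi) := Real.le_sqrt_of_sq_le (by linarith [Real.pi_gt_d2])
  have hcompl : (gaussianReal 0 v).real {x | x ^ 2 ≤ 16 * v}ᶜ ≤ 0.0001 :=
    calc (gaussianReal 0 v).real {x | x ^ 2 ≤ 16 * v}ᶜ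
        = (gaussianReal 0 v).real {x | 4 ^ 2 * v < x ^ 2} := by
          norm_num [Set.compl_ofPred, not_le]
      _ ≤ 2 / (4 * √(2 * Real.pi)) * Real.exp (-4 ^ 2 / 2) :=
          measureReal_gaussianReal_lt_sq_le four_pos v
      _ = 2 / (4 * √(2 * Real.pi)) * Real.exp (-8) := by norm_num
      _ ≤ 2 / (4 * 2.5) * 0.0004 := by gcongr; exact exp_neg_eight_le
      _ ≤ 0.0001 := by norm_num
  have hmeas : MeasurableSet {x : ℝ | x ^ 2 ≤ 16 * v} :=
    measurableSet_le (by fun_prop) (by fun_prop)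
  rw [probReal_compl_eq_one_sub hmeas] at hcompl
  linarith

section IndependentGaussians

variable {Ω ι : Type*} [MeasurableSpace Ω] {P : Measure Ω} [Fintype ι] {X : ι → Ω → ℝ}

lemma hasLaw_sum_gaussianReal {m : ι → ℝ} {v : ι → ℝ≥0}
    (hlaw : ∀ i, HasLaw (X i) (gaussianReal (m i) (v i)) P) (hindep : iIndepFun X P) :
    HasLaw (fun ω ↦ ∑ i, X i ω) (gaussianReal (∑ i, m i) (∑ i, v i)) P where
  aemeasurable := Finset.aemeasurable_fun_sum _ fun i _ ↦ (hlaw i).aemeasurable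
  map_eq := by
    have := hindep.isProbabilityMeasure
    have hmeas : ∀ i, AEMeasurable (X i) P := fun i ↦ (hlaw i).aemeasurable
    have hsum := hindep.charFun_map_fun_sum_eq_prod hmeas
    refine Measure.ext_of_charFun (hsum.trans ?_)
    ext t
    simp only [Finset.prod_apply, (hlaw _).map_eq, charFun_gaussianReal, ← Complex.exp_sum]
    push_cast
    simp only [Finset.sum_sub_distrib, Finset.mul_sum, Finset.sum_mul, Finset.sum_div]

lemma hasLaw_sum_mul_gaussianReal {v : ℝ≥0}
    (hlaw : ∀ i, HasLaw (X i) (gaussianReal 0 v) P) (hindep : iIndepFun X P) (a : ι → ℝ) :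
    HasLaw (fun ω ↦ ∑ i, X i ω * a i) (gaussianReal 0 (∑ i, ‖a i‖₊ ^ 2 * v)) P := by
  have hmul (i : ι) : HasLaw (fun ω ↦ X i ω * a i) (gaussianReal 0 (‖a i‖₊ ^ 2 * v)) P := by
    have hvar : NNReal.mk (a i ^ 2) (sq_nonneg _) = ‖a i‖₊ ^ 2 := NNReal.eq (sq_abs (a i)).symm
    simpa only [mul_zero, hvar] using gaussianReal_mul_const (hlaw i) (a i)
  simpa only [Finset.sum_const_zero] using hasLaw_sum_gaussianReal hmul
    (hindep.comp (fun i x ↦ x * a i) fun i ↦ measurable_mul_const (a i))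

lemma le_measureReal_sq_sum_mul_le {v : ℝ≥0}
    (hlaw : ∀ i, HasLaw (X i) (gaussianReal 0 v) P) (hindep : iIndepFun X P) (a : ι → ℝ) :
    0.9999 ≤ P.real {ω | (∑ i, X i ω * a i) ^ 2 ≤ 16 * ((∑ i, a i ^ 2) * v)} := by
  have hvar : ((∑ i, ‖a i‖₊ ^ 2 * v : ℝ≥0) : ℝ) = (∑ i, a i ^ 2) * v := by
    simp [Finset.sum_mul]
  rw [(hasLaw_sum_mul_gaussianReal hlaw hindep a).measureReal_eq
    (p := fun x ↦ x ^ 2 ≤ 16 * ((∑ i, a i ^ 2) * v)) (measurableSet_le (by fun_prop) (by fun_prop)),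
    ← hvar]
  exact le_measureReal_gaussianReal_sq_le _

end IndependentGaussians

lemma inv_one_sub_le_exp {u : ℝ} (hu : u ≤ 1 / 2) : (1 - u)⁻¹ ≤ Real.exp (u + 2 * u ^ 2) := by
  have hpos : 0 < 1 - u := by linarith
  calc (1 - u)⁻¹ = u / (1 - u) + 1 := by field_simp; ring
    _ ≤ Real.exp (u / (1 - u)) := Real.add_one_le_exp _
    _ ≤ Real.exp (u + 2 * u ^ 2) := by
      gcongr
      rw [div_le_iff₀ hpos]
      nlinarith [mul_nonneg (sq_nonneg u) (sub_nonneg.2 hu)]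

lemma mgf_sq_gaussianReal {v : ℝ≥0} {t : ℝ} (ht : 2 * v * t < 1) :
    mgf (fun x ↦ x ^ 2) (gaussianReal 0 v) t = √((1 - 2 * v * t)⁻¹) := by
  rcases eq_or_ne v 0 with rfl | hv
  · simp [mgf, gaussianReal_zero_var]
  have hpos : 0 < 1 - 2 * v * t := sub_pos.2 ht
  have hdensity (x : ℝ) : gaussianPDFReal 0 v x * Real.exp (t * x ^ 2) =
      (√(2 * Real.pi * v))⁻¹ * Real.exp (-((1 - 2 * v * t) / (2 * v)) * x ^ 2) := by
    rw [gaussianPDFReal, mul_assoc, ← Real.exp_add]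
    congr 2
    field_simp
    ring
  rw [mgf, integral_gaussianReal_eq_integral_smul hv]
  simp only [smul_eq_mul, hdensity]
  rw [integral_const_mul, integral_gaussian, ← Real.sqrt_inv, ← Real.sqrt_mul (by positivity)]
  congr 1
  field_simp

section SumOfSquares

variable {Ω ι : Type*} [MeasurableSpace Ω] {P : Measure Ω} [Fintype ι] {X : ι → Ω → ℝ} {v : ℝ≥0}
  {t ε : ℝ}

lemma mgf_sum_sq_gaussianReal (hlaw : ∀ i, HasLaw (X i) (gaussianReal 0 v) P)
    (hindep : iIndepFun X P) (ht : 2 * v * t < 1) :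
    mgf (fun ω ↦ ∑ i, X i ω ^ 2) P t = √((1 - 2 * v * t)⁻¹) ^ Fintype.card ι := by
  have hsq (i : ι) : mgf (fun ω ↦ X i ω ^ 2) P t = √((1 - 2 * v * t)⁻¹) := by
    rw [← mgf_sq_gaussianReal ht, ← (hlaw i).map_eq,
      mgf_map (hlaw i).aemeasurable (by fun_prop)]
    rfl
  have hprod := (hindep.comp (fun _ x ↦ x ^ 2) fun _ ↦ by fun_prop).mgf_sum₀ (t := t)
    (fun i ↦ (hlaw i).aemeasurable.pow_const 2) Finset.univ
  simpa [Function.comp_def, Finset.sum_fn, hsq] using hprod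

lemma integrable_exp_mul_sum_sq (hlaw : ∀ i, HasLaw (X i) (gaussianReal 0 v) P)
    (hindep : iIndepFun X P) (ht : 2 * v * t < 1) :
    Integrable (fun ω ↦ Real.exp (t * ∑ i, X i ω ^ 2)) P := by
  refine .of_integral_ne_zero ?_
  have : 0 < 1 - 2 * v * t := sub_pos.2 ht
  have hmgf := mgf_sum_sq_gaussianReal hlaw hindep ht
  rw [mgf] at hmgf
  rw [hmgf]
  positivity

lemma mgf_sum_sq_gaussianReal_le (hlaw : ∀ i, HasLaw (X i) (gaussianReal 0 v) P)
    (hindep : iIndepFun X P) (ht : 2 * v * t ≤ 1 / 2) :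
    mgf (fun ω ↦ ∑ i, X i ω ^ 2) P t ≤
      Real.exp (Fintype.card ι * (v * t + 4 * (v * t) ^ 2)) := by
  rw [mgf_sum_sq_gaussianReal hlaw hindep (by linarith), Real.exp_nat_mul]
  gcongr
  calc √((1 - 2 * v * t)⁻¹)
      ≤ √(Real.exp (2 * v * t + 2 * (2 * v * t) ^ 2)) :=
        Real.sqrt_le_sqrt (inv_one_sub_le_exp ht)
    _ = Real.exp (v * t + 4 * (v * t) ^ 2) := by
        rw [← Real.exp_half]
        ring_nf

-- The Chernoff exponent `t = ε / (8 v)` minimises `n (v t + 4 (v t) ^ 2) - t n v (1 + ε)`.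
lemma measureReal_le_sum_sq_le (hv : 0 < v) (hε : 0 ≤ ε) (hε2 : ε ≤ 2)
    (hlaw : ∀ i, HasLaw (X i) (gaussianReal 0 v) P) (hindep : iIndepFun X P) :
    P.real {ω | Fintype.card ι * v * (1 + ε) ≤ ∑ i, X i ω ^ 2} ≤
      Real.exp (-(Fintype.card ι * ε ^ 2) / 16) := by
  have := hindep.isProbabilityMeasure
  set t : ℝ := ε / (8 * v) with ht
  have hvt : v * t = ε / 8 := by rw [ht]; field_simp
  calc P.real {ω | Fintype.card ι * v * (1 + ε) ≤ ∑ i, X i ω ^ 2}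
      ≤ Real.exp (-t * (Fintype.card ι * v * (1 + ε))) * mgf (fun ω ↦ ∑ i, X i ω ^ 2) P t :=
        measure_ge_le_exp_mul_mgf _ (by positivity)
          (integrable_exp_mul_sum_sq hlaw hindep (by linarith))
    _ ≤ Real.exp (-t * (Fintype.card ι * v * (1 + ε))) *
          Real.exp (Fintype.card ι * (v * t + 4 * (v * t) ^ 2)) := by
        gcongr
        exact mgf_sum_sq_gaussianReal_le hlaw hindep (by linarith)
    _ = Real.exp (-(Fintype.card ι * ε ^ 2) / 16) := by
        rw [← Real.exp_add]
        congr 1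
        linear_combination (-(Fintype.card ι : ℝ) * (1 + ε) + Fintype.card ι +
          Fintype.card ι * 4 * (v * t + ε / 8)) * hvt

lemma measureReal_sum_sq_le_le (hv : 0 < v) (hε : 0 ≤ ε)
    (hlaw : ∀ i, HasLaw (X i) (gaussianReal 0 v) P) (hindep : iIndepFun X P) :
    P.real {ω | ∑ i, X i ω ^ 2 ≤ Fintype.card ι * v * (1 - ε)} ≤
      Real.exp (-(Fintype.card ι * ε ^ 2) / 16) := by
  have := hindep.isProbabilityMeasure
  set t : ℝ := -(ε / (8 * v)) with ht
  have hvt : v * t = -ε / 8 := by rw [ht]; field_simp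
  calc P.real {ω | ∑ i, X i ω ^ 2 ≤ Fintype.card ι * v * (1 - ε)}
      ≤ Real.exp (-t * (Fintype.card ι * v * (1 - ε))) * mgf (fun ω ↦ ∑ i, X i ω ^ 2) P t :=
        measure_le_le_exp_mul_mgf _ (neg_nonpos.2 (by positivity))
          (integrable_exp_mul_sum_sq hlaw hindep (by linarith))
    _ ≤ Real.exp (-t * (Fintype.card ι * v * (1 - ε))) *
          Real.exp (Fintype.card ι * (v * t + 4 * (v * t) ^ 2)) := by
        gcongr
        exact mgf_sum_sq_gaussianReal_le hlaw hindep (by linarith)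
    _ = Real.exp (-(Fintype.card ι * ε ^ 2) / 16) := by
        rw [← Real.exp_add]
        congr 1
        linear_combination (-(Fintype.card ι : ℝ) * (1 - ε) + Fintype.card ι +
          Fintype.card ι * 4 * (v * t - ε / 8)) * hvt

lemma one_sub_le_measureReal_abs_sum_sq_sub_le (hv : 0 < v) (hε : 0 ≤ ε) (hε2 : ε ≤ 2)
    (hlaw : ∀ i, HasLaw (X i) (gaussianReal 0 v) P) (hindep : iIndepFun X P) :
    1 - 2 * Real.exp (-(Fintype.card ι * ε ^ 2) / 16) ≤
      P.real {ω | |∑ i, X i ω ^ 2 - Fintype.card ι * v| ≤ Fintype.card ι * v * ε} := by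
  have := hindep.isProbabilityMeasure
  set s := {ω | |∑ i, X i ω ^ 2 - Fintype.card ι * v| ≤ Fintype.card ι * v * ε} with hs
  have hcompl : sᶜ ⊆ {ω | Fintype.card ι * v * (1 + ε) ≤ ∑ i, X i ω ^ 2} ∪
      {ω | ∑ i, X i ω ^ 2 ≤ Fintype.card ι * v * (1 - ε)} := fun ω hω ↦ by
    simp only [hs, Set.mem_compl_iff, Set.mem_ofPred_eq, not_le, lt_abs] at hω
    rcases hω with habove | hbelow
    · exact .inl (by rw [Set.mem_ofPred_eq]; linarith)
    · exact .inr (by rw [Set.mem_ofPred_eq]; linarith)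
  have hunion : P.real sᶜ ≤ 2 * Real.exp (-(Fintype.card ι * ε ^ 2) / 16) := by
    rw [two_mul]
    exact (measureReal_mono hcompl).trans <| (measureReal_union_le _ _).trans <|
      add_le_add (measureReal_le_sum_sq_le hv hε hε2 hlaw hindep)
        (measureReal_sum_sq_le_le hv hε hlaw hindep)
  have hmeas : NullMeasurableSet s P := by
    have := fun i ↦ (hlaw i).aemeasurable
    exact nullMeasurableSet_le (by fun_prop) (by fun_prop)
  rw [probReal_compl_eq_one_sub₀ hmeas] at hunion
  linarith

end SumOfSquares

lemma pow_mul_measure_le_measure_pi {α : Type*} [MeasurableSpace α] (μ : Measure α) [SigmaFinite μ]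
    {n : ℕ} (p : Fin (n + 1)) {s : Set α} (hs : MeasurableSet s) {r : α → α → Prop}
    (hr : MeasurableSet {q : α × α | r q.1 q.2}) {c : ENNReal} (hc : ∀ x ∈ s, c ≤ μ {y | r y x}) :
    c ^ n * μ s ≤ Measure.pi (fun _ : Fin (n + 1) ↦ μ) {w | w p ∈ s ∧ ∀ i ≠ p, r (w i) (w p)} := by
  set T : Set (α × (Fin n → α)) := {q | q.1 ∈ s ∧ ∀ i, r (q.2 i) q.1} with hT
  have hTmeas : MeasurableSet T := by
    have hpair (i : Fin n) : Measurable fun q : α × (Fin n → α) ↦ (q.2 i, q.1) := by fun_prop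
    simp only [hT, Set.ofPred_and, Set.ofPred_forall]
    exact (measurable_fst hs).inter (MeasurableSet.iInter fun i ↦ hpair i hr)
  have hpreimage : {w : Fin (n + 1) → α | w p ∈ s ∧ ∀ i ≠ p, r (w i) (w p)} =
      MeasurableEquiv.piFinSuccAbove (fun _ ↦ α) p ⁻¹' T := by
    ext w
    simp [hT, Fin.forall_iff_succAbove p, Fin.removeNth]
  have hslice : ∀ x ∈ s, c ^ n ≤ Measure.pi (fun _ : Fin n ↦ μ) (Prod.mk x ⁻¹' T) := by
    intro x hx
    have hbox : Prod.mk x ⁻¹' T = Set.univ.pi fun _ ↦ {y | r y x} := by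
      ext q
      simp [hT, hx]
    rw [hbox, Measure.pi_pi, Finset.prod_const, Finset.card_fin]
    gcongr
    exact hc x hx
  rw [hpreimage, (measurePreserving_piFinSuccAbove (fun _ ↦ μ) p).measure_preimage_equiv,
    Measure.prod_apply hTmeas]
  calc c ^ n * μ s = ∫⁻ _ in s, c ^ n ∂μ := (setLIntegral_const s _).symm
    _ ≤ ∫⁻ x in s, Measure.pi (fun _ : Fin n ↦ μ) (Prod.mk x ⁻¹' T) ∂μ :=
        setLIntegral_mono' hs hslice
    _ ≤ ∫⁻ x, Measure.pi (fun _ : Fin n ↦ μ) (Prod.mk x ⁻¹' T) ∂μ := setLIntegral_le_lintegral _ _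

instance isProbabilityMeasure_gaussVec (l : ℕ) : IsProbabilityMeasure (gaussVec l) := by
  unfold gaussVec
  infer_instance

lemma hasLaw_eval_gaussVec {l : ℕ} (j : Fin l) :
    HasLaw (fun w : Fin l → ℝ ↦ w j) (gaussianReal 0 (l : ℝ≥0)⁻¹) (gaussVec l) :=
  (measurePreserving_eval (fun _ ↦ gaussianReal 0 (l : ℝ≥0)⁻¹) j).hasLaw

lemma iIndepFun_eval_gaussVec (l : ℕ) :
    iIndepFun (fun (j : Fin l) (w : Fin l → ℝ) ↦ w j) (gaussVec l) :=
  iIndepFun_pi (X := fun _ ↦ id) fun _ ↦ aemeasurable_id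

lemma enorm_sq {n : ℕ} (v : Fin n → ℝ) : enorm v ^ 2 = ∑ i, v i ^ 2 :=
  Real.sq_sqrt (by positivity)

lemma measurableSet_abs_enorm_sq_sub_one_le (n : ℕ) (ε : ℝ) :
    MeasurableSet {v : Fin n → ℝ | |enorm v ^ 2 - 1| ≤ ε} := by
  simp_rw [enorm_sq]
  exact measurableSet_le (by fun_prop) (by fun_prop)

lemma ofReal_le_gaussVec_abs_enorm_sq_sub_one_le {l : ℕ} (hl : 0 < l) {ε : ℝ} (hε : 0 ≤ ε)
    (hε2 : ε ≤ 2) :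
    ENNReal.ofReal (1 - 2 * Real.exp (-(l * ε ^ 2) / 16)) ≤
      gaussVec l {w | |enorm w ^ 2 - 1| ≤ ε} := by
  have hmean : (Fintype.card (Fin l) : ℝ) * ((l : ℝ≥0)⁻¹ : ℝ≥0) = 1 := by
    have : (l : ℝ) ≠ 0 := by positivity
    simp [this]
  have hconc := one_sub_le_measureReal_abs_sum_sq_sub_le (by positivity) hε hε2
    hasLaw_eval_gaussVec (iIndepFun_eval_gaussVec l)
  rw [hmean, one_mul, Fintype.card_fin] at hconc
  simp_rw [enorm_sq]
  exact ENNReal.ofReal_le_of_le_toReal hconc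

lemma ofReal_le_gaussVec_sq_sum_mul_le {l : ℕ} {v : Fin l → ℝ} {b : ℝ} (hv : enorm v ^ 2 ≤ b) :
    ENNReal.ofReal 0.9999 ≤ gaussVec l {w | (∑ j, w j * v j) ^ 2 ≤ 16 * b / l} := by
  refine (ENNReal.ofReal_le_of_le_toReal (le_measureReal_sq_sum_mul_le hasLaw_eval_gaussVec
    (iIndepFun_eval_gaussVec l) v)).trans (measure_mono <|
    Set.ofPred_subset_ofPred.2 fun w hw ↦ hw.trans ?_)
  rw [← enorm_sq, NNReal.coe_inv, NNReal.coe_natCast, ← div_eq_mul_inv, mul_div_assoc]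
  gcongr

theorem stmt13 : ∃ C : ℝ, 0 < C ∧ ∀ (l n : ℕ), 0 < l → ∀ ε_S : ℝ,
    ε_S ∈ Set.Ioo (0:ℝ) 1 →
    (Measure.pi fun _ : Fin (n+1) => gaussVec l)
        {w : Fin (n+1) → Fin l → ℝ |
          |enorm (w (Fin.last n)) ^ 2 - 1| ≤ ε_S ∧
          ∀ i, i ≠ Fin.last n →
            (∑ j, w i j * w (Fin.last n) j) ^ 2 ≤ 16 * (1 + ε_S) / l}
      ≥ ENNReal.ofReal
          ((0.9999 : ℝ) ^ n * (1 - 2 * Real.exp (-((l:ℝ) * ε_S ^ 2) / C))) := by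
  refine ⟨16, by norm_num, fun l n hl ε ⟨hε0, hε1⟩ ↦ ?_⟩
  have hnorm := ofReal_le_gaussVec_abs_enorm_sq_sub_one_le hl hε0.le (by linarith : ε ≤ 2)
  have hinner : ∀ v ∈ {v : Fin l → ℝ | |enorm v ^ 2 - 1| ≤ ε}, ENNReal.ofReal 0.9999 ≤
      gaussVec l {w | (∑ j, w j * v j) ^ 2 ≤ 16 * (1 + ε) / l} := fun v hv ↦
    ofReal_le_gaussVec_sq_sum_mul_le (by linarith [(abs_le.1 (Set.mem_ofPred_eq ▸ hv)).2])
  rw [ENNReal.ofReal_mul (by positivity), ENNReal.ofReal_pow (by norm_num)]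
  exact (mul_le_mul_right hnorm _).trans <|
    pow_mul_measure_le_measure_pi (gaussVec l) (Fin.last n)
      (r := fun w v ↦ (∑ j, w j * v j) ^ 2 ≤ 16 * (1 + ε) / l)
      (measurableSet_abs_enorm_sq_sub_one_le l ε)
      (measurableSet_le (by fun_prop) (by fun_prop)) hinner

end RARC
end

section
/- Let r, l be positive integers, ε_S ∈ (0,1) and ε_H > 0. Let λ₁ ≥ λ₂ ≥ … ≥ λ_r be real numbers with λ_r < −ε_H, and let w₁, …, w_r ∈ ℝ^l be vectors such that 1 − ε_S ≤ ‖w_r‖² ≤ 1 + ε_S and ⟨w_i, w_r⟩² ≤ 16·(1+ε_S)/l for all i ≠ r. Let κ_H = min{0, λ₁/λ_r} and m = 1 − ε_S + 16·((r−1)/l)·((1+ε_S)/(1−ε_S))·κ_H, and assume 1 − ε_S + 16·((r−1)/l)·((1+ε_S)/(1−ε_S))·(λ₁/λ_r) ≥ 0. Then the smallest eigenvalue of the symmetric l×l matrix Σ_{i=1}^r λ_i·w_i·w_iᵀ satisfies λ_min( Σ_{i=1}^r λ_i·w_i·w_iᵀ ) ≤ −ε_H·m. -/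
open scoped BigOperators NNReal
open MeasureTheory ProbabilityTheory

namespace RARC

/-!
The Rayleigh quotient of `∑ i, λ i • w i (w i)ᵀ` at `w r` is
`λ r ‖w r‖² + ∑ i ≠ r, λ i ⟪w i, w r⟫² / ‖w r‖²`. Since `λ r < 0`, the lower bound on `‖w r‖²` makes
the first term very negative, while near-orthogonality of the other `w i` to `w r` keeps the sum
small even when their `λ i` are positive. Factoring out `λ r` turns `max 0 Λ`, for `Λ` an upper
bound of the other `λ i`, into `min 0 (Λ / λ r)`.
-/

theorem enorm_nonneg {n : ℕ} (v : Fin n → ℝ) : 0 ≤ enorm v :=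
  Real.sqrt_nonneg _

theorem enorm_sq_eq_dotProduct {n : ℕ} (v : Fin n → ℝ) : enorm v ^ 2 = v ⬝ᵥ v := by
  rw [enorm, Real.sq_sqrt (Finset.sum_nonneg fun i _ => sq_nonneg (v i))]
  simp only [dotProduct, sq]

theorem abs_apply_le_enorm {n : ℕ} (v : Fin n → ℝ) (i : Fin n) : |v i| ≤ enorm v :=
  Real.abs_le_sqrt <|
    Finset.single_le_sum (f := fun j => v j ^ 2) (fun j _ => sq_nonneg (v j)) (Finset.mem_univ i)

theorem abs_dotProduct_mulVec_le {n : ℕ} (A : Matrix (Fin n) (Fin n) ℝ) (v : Fin n → ℝ) :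
    |v ⬝ᵥ A.mulVec v| ≤ (∑ i, ∑ j, |A i j|) * enorm v ^ 2 := by
  have term_le (i j : Fin n) : |v i * (A i j * v j)| ≤ |A i j| * enorm v ^ 2 :=
    calc |v i * (A i j * v j)| = |A i j| * (|v i| * |v j|) := by rw [abs_mul, abs_mul]; ring
      _ ≤ |A i j| * enorm v ^ 2 := by
        rw [sq]
        exact mul_le_mul_of_nonneg_left (mul_le_mul (abs_apply_le_enorm v i)
          (abs_apply_le_enorm v j) (abs_nonneg _) (enorm_nonneg v)) (abs_nonneg _)
  simp only [dotProduct, Matrix.mulVec, Finset.mul_sum, Finset.sum_mul]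
  exact (Finset.abs_sum_le_sum_abs _ _).trans <| Finset.sum_le_sum fun i _ =>
    (Finset.abs_sum_le_sum_abs _ _).trans <| Finset.sum_le_sum fun j _ => term_le i j

theorem lambdaMin_le_dotProduct_mulVec {n : ℕ} (A : Matrix (Fin n) (Fin n) ℝ) {v : Fin n → ℝ}
    (hv : enorm v = 1) : lambdaMin A ≤ v ⬝ᵥ A.mulVec v := by
  refine csInf_le ⟨-∑ i, ∑ j, |A i j|, ?_⟩ ⟨v, hv, rfl⟩
  rintro _ ⟨u, hu, rfl⟩
  have h := abs_dotProduct_mulVec_le A u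
  rw [hu, one_pow, mul_one] at h
  exact neg_le_of_abs_le h

theorem lambdaMin_le_dotProduct_mulVec_div {n : ℕ} (A : Matrix (Fin n) (Fin n) ℝ)
    {v : Fin n → ℝ} (hv : 0 < enorm v ^ 2) :
    lambdaMin A ≤ v ⬝ᵥ A.mulVec v / enorm v ^ 2 := by
  have hunit : enorm ((enorm v)⁻¹ • v) = 1 := by
    rw [← pow_eq_one_iff_of_nonneg (enorm_nonneg _) two_ne_zero, enorm_sq_eq_dotProduct,
      smul_dotProduct, dotProduct_smul, ← enorm_sq_eq_dotProduct, smul_smul, smul_eq_mul, ← sq,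
      inv_pow, inv_mul_cancel₀ hv.ne']
  calc lambdaMin A ≤ ((enorm v)⁻¹ • v) ⬝ᵥ A.mulVec ((enorm v)⁻¹ • v) :=
        lambdaMin_le_dotProduct_mulVec A hunit
    _ = v ⬝ᵥ A.mulVec v / enorm v ^ 2 := by
        rw [Matrix.mulVec_smul, smul_dotProduct, dotProduct_smul, smul_smul, smul_eq_mul, ← sq,
          inv_pow, inv_mul_eq_div]

theorem dotProduct_sum_smul_vecMulVec_mulVec {R ι m : Type*} [CommSemiring R] [Fintype ι]
    [Fintype m] (lam : ι → R) (w : ι → m → R) (v : m → R) :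
    v ⬝ᵥ (∑ i, lam i • Matrix.vecMulVec (w i) (w i)).mulVec v = ∑ i, lam i * (w i ⬝ᵥ v) ^ 2 := by
  rw [Matrix.sum_mulVec, dotProduct_sum]
  refine Finset.sum_congr rfl fun i _ => ?_
  rw [Matrix.smul_mulVec, Matrix.vecMulVec_mulVec, op_smul_eq_smul, dotProduct_smul,
    dotProduct_smul, dotProduct_comm v, smul_eq_mul, smul_eq_mul, sq]

theorem mul_min_zero_div_of_neg {K : Type*} [Field K] [LinearOrder K] [IsStrictOrderedRing K]
    {c : K} (hc : c < 0) (x : K) : c * min 0 (x / c) = max 0 x := by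
  rw [(antitone_mul_left hc.le).map_min, mul_zero, mul_div_cancel₀ x hc.ne]

section RankOneSum

variable {ι : Type*} [Fintype ι] {l : ℕ} {lam : ι → ℝ} {w : ι → Fin l → ℝ} {r : ι} {a b Λ ε : ℝ}

theorem lambdaMin_sum_smul_vecMulVec_le_add_sum_compl [DecidableEq ι]
    (hw : 0 < enorm (w r) ^ 2) :
    lambdaMin (∑ i, lam i • Matrix.vecMulVec (w i) (w i))
      ≤ lam r * enorm (w r) ^ 2
        + ∑ i ∈ {r}ᶜ, lam i * ((w i ⬝ᵥ w r) ^ 2 / enorm (w r) ^ 2) := by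
  refine (lambdaMin_le_dotProduct_mulVec_div _ hw).trans_eq ?_
  rw [dotProduct_sum_smul_vecMulVec_mulVec, Fintype.sum_eq_add_sum_compl r, add_div,
    ← enorm_sq_eq_dotProduct, sq (enorm (w r) ^ 2), ← mul_assoc, mul_div_cancel_right₀ _ hw.ne',
    Finset.sum_div]
  simp only [mul_div_assoc]

theorem lambdaMin_sum_smul_vecMulVec_le_add_card_mul (ha : 0 < a) (hr : lam r ≤ 0)
    (hlam : ∀ i, i ≠ r → lam i ≤ Λ) (hΛ : 0 ≤ Λ) (hwr : a ≤ enorm (w r) ^ 2)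
    (hw : ∀ i, i ≠ r → (w i ⬝ᵥ w r) ^ 2 ≤ b) :
    lambdaMin (∑ i, lam i • Matrix.vecMulVec (w i) (w i))
      ≤ lam r * a + (Fintype.card ι - 1) * (Λ * (b / a)) := by
  classical
  have term_le (i : ι) (hi : i ∈ ({r}ᶜ : Finset ι)) :
      lam i * ((w i ⬝ᵥ w r) ^ 2 / enorm (w r) ^ 2) ≤ Λ * (b / a) := by
    have hir : i ≠ r := by simpa using hi
    have hb : 0 ≤ b := (sq_nonneg _).trans (hw i hir)
    gcongr
    exacts [hlam i hir, hw i hir]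
  have hcard : (({r}ᶜ : Finset ι).card : ℝ) = Fintype.card ι - 1 := by
    rw [Finset.card_compl, Finset.card_singleton,
      Nat.cast_pred (Fintype.card_pos_iff.2 ⟨r⟩)]
  refine (lambdaMin_sum_smul_vecMulVec_le_add_sum_compl (ha.trans_le hwr)).trans ?_
  refine add_le_add (mul_le_mul_of_nonpos_left hwr hr) ?_
  simpa only [nsmul_eq_mul, hcard] using Finset.sum_le_card_nsmul _ _ _ term_le

theorem stmt14_general (ha : 0 < a) (hr : lam r < 0) (hrε : lam r ≤ -ε)
    (hlam : ∀ i, i ≠ r → lam i ≤ Λ) (hwr : a ≤ enorm (w r) ^ 2)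
    (hw : ∀ i, i ≠ r → (w i ⬝ᵥ w r) ^ 2 ≤ b)
    (hm : 0 ≤ a + (Fintype.card ι - 1) * (b / a) * (Λ / lam r)) :
    lambdaMin (∑ i, lam i • Matrix.vecMulVec (w i) (w i))
      ≤ -ε * (a + (Fintype.card ι - 1) * (b / a) * min 0 (Λ / lam r)) := by
  have hmin : 0 ≤ a + (Fintype.card ι - 1) * (b / a) * min 0 (Λ / lam r) := by
    rcases min_choice 0 (Λ / lam r) with h | h <;> rw [h]
    · simpa using ha.le
    · exact hm
  calc lambdaMin (∑ i, lam i • Matrix.vecMulVec (w i) (w i))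
      ≤ lam r * a + (Fintype.card ι - 1) * (max 0 Λ * (b / a)) :=
        lambdaMin_sum_smul_vecMulVec_le_add_card_mul ha hr.le
          (fun i hi => (hlam i hi).trans (le_max_right 0 Λ)) (le_max_left 0 Λ) hwr hw
    _ = lam r * (a + (Fintype.card ι - 1) * (b / a) * min 0 (Λ / lam r)) := by
        rw [← mul_min_zero_div_of_neg hr]; ring
    _ ≤ -ε * (a + (Fintype.card ι - 1) * (b / a) * min 0 (Λ / lam r)) :=
        mul_le_mul_of_nonneg_right hrε hmin

end RankOneSum

theorem stmt14 (n l : ℕ) (hl : 0 < l) (ε_S ε_H : ℝ)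
    (hεS : ε_S ∈ Set.Ioo (0:ℝ) 1) (hεH : 0 < ε_H)
    (lam : Fin (n+1) → ℝ) (hlam : Antitone lam) (hlast : lam (Fin.last n) < -ε_H)
    (w : Fin (n+1) → (Fin l → ℝ))
    (hw1 : 1 - ε_S ≤ enorm (w (Fin.last n)) ^ 2)
    (hw2 : enorm (w (Fin.last n)) ^ 2 ≤ 1 + ε_S)
    (hw3 : ∀ i, i ≠ Fin.last n →
      (∑ j, w i j * w (Fin.last n) j) ^ 2 ≤ 16 * (1 + ε_S) / l)
    (hb : 1 - ε_S + 16 * ((n:ℝ)/l) * ((1 + ε_S)/(1 - ε_S))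
            * (lam 0 / lam (Fin.last n)) ≥ 0) :
    lambdaMin (∑ i, lam i • Matrix.vecMulVec (w i) (w i))
      ≤ -ε_H * (1 - ε_S + 16 * ((n:ℝ)/l) * ((1 + ε_S)/(1 - ε_S))
            * min 0 (lam 0 / lam (Fin.last n))) := by
  have hcoeff : 16 * ((n : ℝ) / l) * ((1 + ε_S) / (1 - ε_S))
      = (Fintype.card (Fin (n + 1)) - 1) * (16 * (1 + ε_S) / l / (1 - ε_S)) := by
    rw [Fintype.card_fin, Nat.cast_succ]; ring
  rw [hcoeff] at hb ⊢
  exact stmt14_general (sub_pos.2 hεS.2) (hlast.trans (neg_lt_zero.2 hεH)) hlast.le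
    (fun i _ => hlam (Fin.zero_le i)) hw1 hw3 hb

end RARC
end
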